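/- There exists a constant C′ > 0, depending only on Ω, μ, δ₀, κ⁺, κ⁻ and φ (in particular independent of δ ∈ (0, δ₀)), with the following property: if u : cl(Ω) → ℝ is Lipschitz on Ω, continuous on cl(Ω) with u = φ on ∂Ω, and satisfies div(a∇u) = 0 weakly, i.e. ∫_Ω a(x) ⟨∇u(x), ∇ψ(x)⟩ dx = 0 for every smooth function ψ : ℝ² → ℝ with compact support contained in Ω (where ∇u denotes the almost-everywhere defined gradient of the Lipschitz function u), then ess sup_{x ∈ Ω} |∇u(x)| ≤ C′. -/

import Mathlib

open Set MeasureTheory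

/-- Partial derivative in direction `i` of a function on `ℝ²`. -/
noncomputable def pd (i : Fin 2) (f : EuclideanSpace ℝ (Fin 2) → ℝ)
    (x : EuclideanSpace ℝ (Fin 2)) : ℝ :=
  fderiv ℝ f x (EuclideanSpace.single i 1)

/-- The center `(0, -2-2δ)` of the lower disk `B⁻`. -/
noncomputable def ctr (δ : ℝ) : EuclideanSpace ℝ (Fin 2) :=
  (WithLp.equiv 2 (Fin 2 → ℝ)).symm ![0, -2 - 2 * δ]

/-- The upper unit disk `B⁺`, centered at the origin. -/
noncomputable def Bp : Set (EuclideanSpace ℝ (Fin 2)) := Metric.ball 0 1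

/-- The lower unit disk `B⁻`, centered at `(0, -2-2δ)`. -/
noncomputable def Bm (δ : ℝ) : Set (EuclideanSpace ℝ (Fin 2)) := Metric.ball (ctr δ) 1

open Classical in
/-- The conductivity: `κ⁺` on `B⁺`, `κ⁻` on `B⁻`, and `1` elsewhere. -/
noncomputable def aFun (δ κp κm : ℝ) (x : EuclideanSpace ℝ (Fin 2)) : ℝ :=
  if x ∈ Bp then κp else if x ∈ Bm δ then κm else 1

/-- `Ω^σ = {x ∈ Ω : dist(x, ∂Ω) ≥ σ}`. -/
noncomputable def innerReg (Ω : Set (EuclideanSpace ℝ (Fin 2))) (σ : ℝ) :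
    Set (EuclideanSpace ℝ (Fin 2)) :=
  {x ∈ Ω | σ ≤ Metric.infDist x (frontier Ω)}

/-- `Ω` has smooth boundary: it is the sublevel set of a smooth function with
nonvanishing gradient on the boundary. -/
def SmoothBoundary (Ω : Set (EuclideanSpace ℝ (Fin 2))) : Prop :=
  ∃ f : EuclideanSpace ℝ (Fin 2) → ℝ, ContDiff ℝ (⊤ : ℕ∞) f ∧ Ω = {x | f x < 0} ∧
    ∀ x ∈ frontier Ω, fderiv ℝ f x ≠ 0

/-- `‖φ‖_{L^∞(∂Ω)}`. -/
noncomputable def bdryNorm (Ω : Set (EuclideanSpace ℝ (Fin 2))) (φ : EuclideanSpace ℝ (Fin 2) → ℝ) : ℝ :=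
  sSup ((fun y => |φ y|) '' frontier Ω)

open Filter Topology Metric InnerProductSpace EuclideanGeometry
open scoped Gradient RealInnerProductSpace NNReal ENNReal ContDiff Convolution Laplacian
  Function

/-!
In the plane the inversion in a circle is conformal, so it preserves the Dirichlet integral. Let
`fold_j` retract the plane onto the closed disk `j` by that inversion. Folding `u` produces a source
on the circle `j` which, after multiplication by `(κ_j - 1) / 2`, cancels the one coming from the
jump of the conductivity: `h = u + ∑ j, (κ_j - 1) / 2 * (u ∘ fold_j)` is harmonic across the disks,
and the interior gradient estimate for harmonic functions bounds the Lipschitz constant of `h` by a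
constant `N`. Solving for `u` on each disk, its Lipschitz constants `P₀`, `P₁` there satisfy
`(κ_i + 1) / 2 * P_i ≤ N + |κ_j - 1| / 2 * P_j` for `j ≠ i`, which can be solved whatever the
distance of the disks, because `|κ₀ - 1| * |κ₁ - 1| < (κ₀ + 1) * (κ₁ + 1)`.

Near the boundary `u` is harmonic. A barrier built from the defining function of the domain gives
`|u x - φ y| ≤ A * dist x y` for `y` on the boundary, and the interior estimate on a ball of radius
comparable to the distance to the boundary turns this into a gradient bound.
-/

section Lipschitz

theorem inter_frontier_nonempty_of_isPreconnected {X : Type*} [TopologicalSpace X] {s V : Set X}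
    (hs : IsPreconnected s) (h₁ : (s ∩ V).Nonempty) (h₂ : (s ∩ Vᶜ).Nonempty) :
    (s ∩ frontier V).Nonempty := by
  by_contra! h
  have hsub : s ⊆ interior V ∪ interior Vᶜ := fun x hx ↦ by
    by_contra hx'
    rw [interior_compl, mem_union, mem_compl_iff, not_or, not_not] at hx'
    exact (h ▸ ⟨hx, hx'.2, hx'.1⟩ : x ∈ (∅ : Set X))
  obtain ⟨x, -, hx₁, hx₂⟩ := hs _ _ isOpen_interior isOpen_interior hsub
    (h₁.mono fun x hx ↦ ⟨hx.1, (hsub hx.1).resolve_right fun hc ↦ interior_subset hc hx.2⟩)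
    (h₂.mono fun x hx ↦ ⟨hx.1, (hsub hx.1).resolve_left fun hc ↦ hx.2 (interior_subset hc)⟩)
  exact interior_subset hx₂ (interior_subset hx₁)

theorem lipschitzWith_of_closure_of_closure_compl {E X : Type*} [NormedAddCommGroup E]
    [NormedSpace ℝ E] [PseudoMetricSpace X] {f : E → X} {V : Set E} {K : ℝ≥0}
    (h₁ : LipschitzOnWith K f (closure V)) (h₂ : LipschitzOnWith K f (closure Vᶜ)) :
    LipschitzWith K f := by
  have hcross : ∀ x ∈ V, ∀ y ∉ V, dist (f x) (f y) ≤ K * dist x y := by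
    intro x hx y hy
    obtain ⟨p, hp, hpV⟩ := inter_frontier_nonempty_of_isPreconnected
      (convex_segment (𝕜 := ℝ) x y).isPreconnected
      ⟨x, left_mem_segment ℝ x y, hx⟩ ⟨y, right_mem_segment ℝ x y, hy⟩
    rw [frontier_eq_closure_inter_closure] at hpV
    calc dist (f x) (f y) ≤ dist (f x) (f p) + dist (f p) (f y) := dist_triangle _ _ _
      _ ≤ K * dist x p + K * dist p y := add_le_add
          (h₁.dist_le_mul x (subset_closure hx) p hpV.1)
          (h₂.dist_le_mul p hpV.2 y (subset_closure hy))
      _ = K * dist x y := by rw [← mul_add, dist_add_dist_of_mem_segment hp]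
  refine LipschitzWith.of_dist_le_mul fun x y ↦ ?_
  by_cases hx : x ∈ V <;> by_cases hy : y ∈ V
  · exact h₁.dist_le_mul x (subset_closure hx) y (subset_closure hy)
  · exact hcross x hx y hy
  · simpa only [dist_comm] using hcross y hy x hx
  · exact h₂.dist_le_mul x (subset_closure hx) y (subset_closure hy)

theorem lipschitzWith_indicator_of_frontier {E : Type*} [NormedAddCommGroup E] [NormedSpace ℝ E]
    {g : E → ℝ} {V : Set E} {K : ℝ≥0} (hg : LipschitzOnWith K g (closure V))
    (h0 : EqOn g 0 (frontier V)) : LipschitzWith K (V.indicator g) := by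
  have hin : EqOn (V.indicator g) g (closure V) := fun x hx ↦ by
    by_cases hxV : x ∈ V
    · exact indicator_of_mem hxV g
    · rw [indicator_of_notMem hxV, h0 ⟨hx, fun h ↦ hxV (interior_subset h)⟩, Pi.zero_apply]
  have hout : EqOn (V.indicator g) 0 (closure Vᶜ) := fun x hx ↦ by
    by_cases hxV : x ∈ V
    · rw [indicator_of_mem hxV,
        h0 (frontier_eq_closure_inter_closure.symm.subset ⟨subset_closure hxV, hx⟩)]
    · exact indicator_of_notMem hxV g
  refine lipschitzWith_of_closure_of_closure_compl (V := V) (fun x hx y hy ↦ ?_) fun x hx y hy ↦ ?_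
  · rw [hin hx, hin hy]
    exact hg hx hy
  · rw [hout hx, hout hy, Pi.zero_apply, Pi.zero_apply, edist_self]
    exact zero_le

theorem exists_isLeast_lipschitzOnWith {X Y : Type*} [PseudoMetricSpace X] [PseudoMetricSpace Y]
    {f : X → Y} {s : Set X} {K : ℝ≥0} (hf : LipschitzOnWith K f s) :
    ∃ P : ℝ≥0, IsLeast {K | LipschitzOnWith K f s} P := by
  have hclosed : IsClosed {K : ℝ≥0 | LipschitzOnWith K f s} := by
    simp only [lipschitzOnWith_iff_dist_le_mul, ofPred_forall]
    refine isClosed_iInter fun x ↦ isClosed_iInter fun _ ↦ isClosed_iInter fun y ↦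
      isClosed_iInter fun _ ↦ isClosed_le continuous_const ?_
    fun_prop
  exact ⟨_, hclosed.isLeast_csInf ⟨K, hf⟩ (OrderBot.bddBelow _)⟩

theorem lipschitzWith_sum_mul {ι X : Type*} [PseudoMetricSpace X] {t : Finset ι} {γ : ι → ℝ}
    {F : ι → X → ℝ} {P : ι → ℝ≥0} (hF : ∀ j ∈ t, LipschitzWith (P j) (F j)) :
    LipschitzWith (∑ j ∈ t, ‖γ j‖₊ * P j) fun x ↦ ∑ j ∈ t, γ j * F j x := by
  refine LipschitzWith.of_dist_le_mul fun x y ↦ (dist_sum_sum_le ..).trans ?_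
  push_cast
  rw [Finset.sum_mul]
  refine Finset.sum_le_sum fun j hj ↦ ?_
  rw [dist_eq_norm, ← mul_sub, norm_mul, ← dist_eq_norm, mul_assoc]
  gcongr
  exact (hF j hj).dist_le_mul x y

end Lipschitz

section Gradient

variable {E : Type*} [NormedAddCommGroup E] [InnerProductSpace ℝ E] [CompleteSpace E]
  {f g : E → ℝ} {x : E}

theorem norm_gradient : ‖∇ f x‖ = ‖fderiv ℝ f x‖ :=
  (toDual ℝ E).symm.norm_map _

theorem norm_gradient_le_of_lipschitzWith {K : ℝ≥0} (hf : LipschitzWith K f) : ‖∇ f x‖ ≤ K :=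
  norm_gradient.trans_le (norm_fderiv_le_of_lipschitz ℝ hf)

theorem gradient_eq_zero_of_notMem_tsupport (hx : x ∉ tsupport f) : ∇ f x = 0 := by
  rw [(notMem_tsupport_iff_eventuallyEq.1 hx).gradient_eq]
  exact gradient_fun_const x 0

theorem gradient_sub (hf : DifferentiableAt ℝ f x) (hg : DifferentiableAt ℝ g x) :
    ∇ (f - g) x = ∇ f x - ∇ g x := by
  simp only [gradient, fderiv_sub hf hg, map_sub]

theorem fderiv_comp_const_sub {F : Type*} [NormedAddCommGroup F] [NormedSpace ℝ F]
    {f : F → ℝ} {c x : F} (hf : DifferentiableAt ℝ f (c - x)) :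
    fderiv ℝ (fun y ↦ f (c - y)) x = -fderiv ℝ f (c - x) := by
  have h := (hf.hasFDerivAt.comp x ((hasFDerivAt_id x).const_sub c)).fderiv
  rw [ContinuousLinearMap.comp_neg, ContinuousLinearMap.comp_id] at h
  exact h

theorem measurable_gradient [FiniteDimensional ℝ E] [MeasurableSpace E] [BorelSpace E]
    (f : E → ℝ) : Measurable (∇ f) :=
  (toDual ℝ E).symm.continuous.measurable.comp (measurable_fderiv ℝ f)

end Gradient

section Mollification

variable {E : Type*} [NormedAddCommGroup E]

/-- A sequence of bump functions at the origin with supports shrinking to a point; the ratio of the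
two radii is constant, as the Lebesgue differentiation theorem requires. -/
noncomputable def shrinkingBump (n : ℕ) : ContDiffBump (0 : E) where
  rIn := 1 / ((n : ℝ) + 1)
  rOut := 2 * (1 / ((n : ℝ) + 1))
  rIn_pos := by positivity
  rIn_lt_rOut := by linarith [show 0 < 1 / ((n : ℝ) + 1) by positivity]

theorem tendsto_rOut_shrinkingBump :
    Tendsto (fun n ↦ (shrinkingBump n : ContDiffBump (0 : E)).rOut) atTop (𝓝 0) := by
  simpa [shrinkingBump] using tendsto_one_div_add_atTop_nhds_zero_nat.const_mul (2 : ℝ)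

variable [InnerProductSpace ℝ E] [FiniteDimensional ℝ E] [MeasurableSpace E] [BorelSpace E]
  {F : Type*} [NormedAddCommGroup F] [NormedSpace ℝ F]

/-- The mollification of `g`: its convolution with the bump function `ρ`, normalized to have
integral one. -/
noncomputable def mollify (ρ : ContDiffBump (0 : E)) (g : E → F) : E → F :=
  ρ.normed volume ⋆[ContinuousLinearMap.lsmul ℝ ℝ, volume] g

theorem mollify_apply (ρ : ContDiffBump (0 : E)) (g : E → F) (x : E) :
    mollify ρ g x = ∫ y, ρ.normed volume (x - y) • g y :=
  convolution_eq_swap _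

theorem contDiff_mollify (ρ : ContDiffBump (0 : E)) {g : E → F} (hg : LocallyIntegrable g) :
    ContDiff ℝ ∞ (mollify ρ g) :=
  ρ.hasCompactSupport_normed.contDiff_convolution_left _ ρ.contDiff_normed hg

theorem dist_mollify_le (ρ : ContDiffBump (0 : E)) {g : E → ℝ} {x : E}
    (hgm : AEStronglyMeasurable g) {c M : ℝ} (hM : 0 ≤ M)
    (h : ∀ y ∈ ball x ρ.rOut, dist (g y) c ≤ M) : dist (mollify ρ g x) c ≤ M :=
  dist_convolution_le hM ρ.support_normed_eq.subset ρ.nonneg_normed ρ.integral_normed hgm h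

theorem mollify_nonneg (ρ : ContDiffBump (0 : E)) {g : E → ℝ} (hg : ∀ x, 0 ≤ g x) (x : E) :
    0 ≤ mollify ρ g x := by
  rw [mollify_apply]
  exact integral_nonneg fun y ↦ mul_nonneg (ρ.nonneg_normed _) (hg y)

theorem tsupport_mollify_subset (ρ : ContDiffBump (0 : E)) (g : E → F) :
    tsupport (mollify ρ g) ⊆ cthickening ρ.rOut (tsupport g) := by
  refine closure_minimal ?_ isClosed_cthickening
  refine (support_convolution_subset _).trans ?_
  rw [ρ.support_normed_eq, ball_add_zero]
  exact (thickening_subset_of_subset _ (subset_tsupport g)).trans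
    (thickening_subset_cthickening _ _)

theorem tendsto_mollify {g : E → ℝ} (hg : Continuous g) (x : E) :
    Tendsto (fun n ↦ mollify (shrinkingBump n) g x) atTop (𝓝 (g x)) :=
  ContDiffBump.convolution_tendsto_right_of_continuous tendsto_rOut_shrinkingBump hg x

theorem ae_tendsto_mollify [CompleteSpace F] {g : E → F} (hg : LocallyIntegrable g) :
    ∀ᵐ x, Tendsto (fun n ↦ mollify (shrinkingBump n) g x) atTop (𝓝 (g x)) :=
  ContDiffBump.ae_convolution_tendsto_right_of_locallyIntegrable tendsto_rOut_shrinkingBump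
    (.of_forall fun _ ↦ le_rfl) hg

theorem fderiv_mollify_apply [CompleteSpace F] (ρ : ContDiffBump (0 : E)) {g : E → F}
    (hg : LocallyIntegrable g) (x v : E) :
    fderiv ℝ (mollify ρ g) x v = ∫ y, fderiv ℝ (ρ.normed volume) (x - y) v • g y := by
  have hconv := (ρ.hasCompactSupport_normed (μ := volume)).fderiv (𝕜 := ℝ)
    |>.convolutionExists_left ((ContinuousLinearMap.lsmul ℝ ℝ).precompL E)
      (ρ.contDiff_normed.continuous_fderiv one_ne_zero) hg x
  rw [mollify, (ρ.hasCompactSupport_normed.hasFDerivAt_convolution_left _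
    ρ.contDiff_normed hg x).fderiv, convolution_eq_swap,
    ContinuousLinearMap.integral_apply]
  · rfl
  · exact (convolutionExistsAt_iff_integrable_swap).1 hconv

theorem locallyIntegrable_gradient {u : E → ℝ} {K : ℝ≥0} (hu : LipschitzWith K u) :
    LocallyIntegrable (∇ u) :=
  (memLp_top_of_bound (measurable_gradient u).aestronglyMeasurable K
    (.of_forall fun _ ↦ norm_gradient_le_of_lipschitzWith hu)).locallyIntegrable le_top

theorem gradient_mollify (ρ : ContDiffBump (0 : E)) {u : E → ℝ} {K : ℝ≥0}
    (hu : LipschitzWith K u) (x : E) : ∇ (mollify ρ u) x = mollify ρ (∇ u) x := by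
  have hρ : ContDiff ℝ 1 fun y ↦ ρ.normed volume (x - y) :=
    ρ.contDiff_normed.comp (contDiff_const.sub contDiff_id)
  have hρc : HasCompactSupport fun y ↦ ρ.normed volume (x - y) :=
    ρ.hasCompactSupport_normed.comp_homeomorph (Homeomorph.subLeft x)
  obtain ⟨D, hD⟩ := hρ.lipschitzWith_of_hasCompactSupport hρc one_ne_zero
  have hint : Integrable fun y ↦ ρ.normed volume (x - y) • ∇ u y :=
    (locallyIntegrable_gradient hu).integrable_smul_left_of_hasCompactSupport hρ.continuous hρc
  refine ext_inner_right ℝ fun v ↦ ?_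
  calc ⟪∇ (mollify ρ u) x, v⟫
      = ∫ y, fderiv ℝ (ρ.normed volume) (x - y) v • u y := by
        rw [inner_gradient_left, fderiv_mollify_apply ρ hu.continuous.locallyIntegrable]
    _ = ∫ y, lineDeriv ℝ (fun y ↦ ρ.normed volume (x - y)) y (-v) * u y := by
        refine integral_congr_ae (.of_forall fun y ↦ ?_)
        simp only [smul_eq_mul]
        rw [(hρ.differentiable one_ne_zero y).lineDeriv_eq_fderiv, fderiv_comp_const_sub
          ((ρ.contDiff_normed (n := 1)).differentiable one_ne_zero _)]
        simp
    _ = ∫ y, lineDeriv ℝ u y v * ρ.normed volume (x - y) :=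
        (hu.integral_lineDeriv_mul_eq hD hρc v).symm
    _ = ∫ y, ⟪ρ.normed volume (x - y) • ∇ u y, v⟫ := by
        refine integral_congr_ae ?_
        filter_upwards [hu.ae_differentiableAt] with y hy
        rw [hy.lineDeriv_eq_fderiv, real_inner_smul_left, inner_gradient_left, mul_comm]
    _ = ⟪mollify ρ (∇ u) x, v⟫ := by
        simp_rw [real_inner_comm v]
        rw [mollify_apply, integral_inner hint v]

end Mollification

section LipschitzTestFunctions

variable {E : Type*} [NormedAddCommGroup E] [InnerProductSpace ℝ E] [FiniteDimensional ℝ E]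
  [MeasurableSpace E] [BorelSpace E]

theorem eq_of_ae_gradient_eq_zero {u : E → ℝ} {K : ℝ≥0} (hu : LipschitzWith K u)
    (h : ∇ u =ᵐ[volume] 0) (x y : E) : u x = u y := by
  have hconst (n : ℕ) : mollify (shrinkingBump n) u x = mollify (shrinkingBump n) u y := by
    refine is_const_of_fderiv_eq_zero (𝕜 := ℝ) ((contDiff_mollify _
      hu.continuous.locallyIntegrable).differentiable (by simp)) (fun z ↦ ?_) x y
    rw [← norm_eq_zero, ← norm_gradient, gradient_mollify _ hu, mollify_apply,
      integral_eq_zero_of_ae, norm_zero]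
    filter_upwards [h] with t ht
    simp [ht]
  refine tendsto_nhds_unique (tendsto_mollify hu.continuous x) ?_
  simpa only [hconst] using tendsto_mollify hu.continuous y

theorem eventually_tsupport_mollify_subset {T : E → ℝ} (hTc : HasCompactSupport T) {U : Set E}
    (hU : IsOpen U) (hTU : tsupport T ⊆ U) :
    ∀ᶠ n in atTop, HasCompactSupport (mollify (shrinkingBump n) T) ∧
      tsupport (mollify (shrinkingBump n) T) ⊆ U := by
  obtain ⟨δ, hδ, hδU⟩ := hTc.isCompact.exists_cthickening_subset_open hU hTU
  filter_upwards [(tendsto_rOut_shrinkingBump (E := E)).eventually (ge_mem_nhds hδ)] with n hn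
  have hsub := (tsupport_mollify_subset (shrinkingBump n) T).trans (cthickening_mono hn _)
  exact ⟨hTc.isCompact.cthickening.of_isClosed_subset isClosed_closure hsub, hsub.trans hδU⟩

theorem integrable_inner_gradient {G : E → E} (hG : LocallyIntegrable G) {T : E → ℝ} {L : ℝ≥0}
    (hT : LipschitzWith L T) (hTc : HasCompactSupport T) : Integrable fun x ↦ ⟪G x, ∇ T x⟫ := by
  have hbound : Integrable ((tsupport T).indicator fun x ↦ ‖G x‖ * L) :=
    IntegrableOn.integrable_indicator ((hG.integrableOn_isCompact hTc).norm.mul_const _)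
      hTc.isCompact.measurableSet
  refine hbound.mono' (hG.aestronglyMeasurable.inner
    (measurable_gradient T).aestronglyMeasurable) (.of_forall fun x ↦ ?_)
  by_cases hx : x ∈ tsupport T
  · rw [indicator_of_mem hx]
    exact (norm_inner_le_norm _ _).trans
      (mul_le_mul_of_nonneg_left (norm_gradient_le_of_lipschitzWith hT) (norm_nonneg _))
  · rw [indicator_of_notMem hx, gradient_eq_zero_of_notMem_tsupport hx, inner_zero_right, norm_zero]

theorem tendsto_integral_inner_gradient_mollify {G : E → E} (hG : LocallyIntegrable G)
    {T : E → ℝ} {L : ℝ≥0} (hT : LipschitzWith L T) (hTc : HasCompactSupport T) :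
    Tendsto (fun n ↦ ∫ x, ⟪G x, ∇ (mollify (shrinkingBump n) T) x⟫) atTop
      (𝓝 (∫ x, ⟪G x, ∇ T x⟫)) := by
  set S := cthickening 1 (tsupport T)
  have hSc : IsCompact S := hTc.isCompact.cthickening
  have hnorm (n : ℕ) (x : E) : ‖∇ (mollify (shrinkingBump n) T) x‖ ≤ L := by
    rw [gradient_mollify _ hT, ← dist_zero_right]
    exact dist_convolution_le L.2 (shrinkingBump n).support_normed_eq.subset
      (shrinkingBump n).nonneg_normed (shrinkingBump n).integral_normed
      (measurable_gradient T).aestronglyMeasurable fun y _ ↦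
        (dist_zero_right _).trans_le (norm_gradient_le_of_lipschitzWith hT)
  have hsub : ∀ᶠ n in atTop, tsupport (mollify (shrinkingBump n) T) ⊆ S := by
    filter_upwards [(tendsto_rOut_shrinkingBump (E := E)).eventually (ge_mem_nhds one_pos)]
      with n hn
    exact (tsupport_mollify_subset _ T).trans (cthickening_mono hn _)
  refine tendsto_integral_filter_of_dominated_convergence (S.indicator fun x ↦ ‖G x‖ * L)
    (.of_forall fun n ↦ hG.aestronglyMeasurable.inner (measurable_gradient _).aestronglyMeasurable)
    ?_ (IntegrableOn.integrable_indicator ((hG.integrableOn_isCompact hSc).norm.mul_const _)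
      hSc.measurableSet) ?_
  · filter_upwards [hsub] with n hn
    refine .of_forall fun x ↦ ?_
    by_cases hx : x ∈ S
    · rw [indicator_of_mem hx]
      exact (norm_inner_le_norm _ _).trans (mul_le_mul_of_nonneg_left (hnorm n x) (norm_nonneg _))
    · rw [indicator_of_notMem hx, gradient_eq_zero_of_notMem_tsupport fun h ↦ hx (hn h),
        inner_zero_right, norm_zero]
  · filter_upwards [ae_tendsto_mollify (locallyIntegrable_gradient hT)] with x hx
    simp only [gradient_mollify _ hT]
    exact tendsto_const_nhds.inner hx

end LipschitzTestFunctions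

section Excess

/-- The positive part of `u - c` in `U`, extended by zero. -/
noncomputable def excess {X : Type*} (U : Set X) (u : X → ℝ) (c : ℝ) : X → ℝ :=
  U.indicator fun x ↦ max (u x - c) 0

theorem excess_nonneg {X : Type*} {U : Set X} {u : X → ℝ} (c : ℝ) (x : X) : 0 ≤ excess U u c x :=
  indicator_nonneg (fun _ _ ↦ le_max_right _ _) x

variable {E : Type*} [NormedAddCommGroup E] {u : E → ℝ} {U : Set E} {c : ℝ}

theorem lipschitzWith_excess [NormedSpace ℝ E] {K : ℝ≥0} (hu : LipschitzWith K u)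
    (hc : ∀ x ∈ frontier U, u x ≤ c) : LipschitzWith K (excess U u c) := by
  refine lipschitzWith_indicator_of_frontier (LipschitzWith.lipschitzOnWith ?_) fun x hx ↦
    max_eq_right (sub_nonpos.2 (hc x hx))
  exact (LipschitzWith.of_dist_le_mul fun x y ↦ by simpa using hu.dist_le_mul x y).max_const 0

theorem tsupport_excess_subset (hu : Continuous u) (hU : IsOpen U)
    (hc : ∀ x ∈ frontier U, u x < c) : tsupport (excess U u c) ⊆ U := by
  have hcl : tsupport (excess U u c) ⊆ closure U ∩ {x | c ≤ u x} := by
    refine closure_minimal (fun x hx ↦ ?_)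
      (isClosed_closure.inter (isClosed_le continuous_const hu))
    have hxU : x ∈ U := mem_of_indicator_ne_zero hx
    refine ⟨subset_closure hxU, ?_⟩
    by_contra hlt
    refine hx ?_
    rw [excess, indicator_of_mem hxU]
    exact max_eq_right (sub_nonpos.2 (not_le.1 hlt).le)
  intro x hx
  by_contra hxU
  exact (hc x (hU.frontier_eq ▸ ⟨(hcl hx).1, hxU⟩)).not_ge (hcl hx).2

theorem inner_gradient_excess [InnerProductSpace ℝ E] [CompleteSpace E] (hu : Continuous u)
    (hU : IsOpen U) (x : E) :
    ⟪∇ u x, ∇ (excess U u c) x⟫ = ‖∇ (excess U u c) x‖ ^ 2 := by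
  by_cases hx : x ∈ U ∧ c < u x
  · have hev : excess U u c =ᶠ[𝓝 x] fun y ↦ u y - c := by
      filter_upwards [hU.mem_nhds hx.1, hu.continuousAt.eventually_const_lt hx.2] with y hyU hy
      rw [excess, indicator_of_mem hyU]
      exact max_eq_left (sub_nonneg.2 hy.le)
    rw [hev.gradient_eq, show ∇ (fun y ↦ u y - c) x = ∇ u x by
      simp only [gradient, fderiv_sub_const], real_inner_self_eq_norm_sq]
  · have hzero : excess U u c x = 0 := by
      by_cases hxU : x ∈ U
      · rw [excess, indicator_of_mem hxU]
        exact max_eq_right (by simpa [hxU] using hx)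
      · exact indicator_of_notMem hxU _
    have hmin : IsLocalMin (excess U u c) x :=
      .of_forall fun y ↦ hzero.trans_le (excess_nonneg c y)
    rw [show ∇ (excess U u c) x = 0 by simp only [gradient, hmin.fderiv_eq_zero, map_zero],
      inner_zero_right, norm_zero, zero_pow two_ne_zero]

end Excess

section WeakSolution

variable {E : Type*} [NormedAddCommGroup E] [InnerProductSpace ℝ E] [FiniteDimensional ℝ E]
  [MeasurableSpace E] [BorelSpace E]

/-- `u` is a weak solution of `div (a ∇u) = 0` in `U`, tested against smooth functions with compact
support in `U`. The gradient is meant for Lipschitz `u`, for which it exists almost everywhere. -/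
def IsWeakSolution (a : E → ℝ) (U : Set E) (u : E → ℝ) : Prop :=
  ∀ ψ : E → ℝ, ContDiff ℝ ∞ ψ → HasCompactSupport ψ → tsupport ψ ⊆ U →
    ∫ x, a x * ⟪∇ u x, ∇ ψ x⟫ = 0

/-- `u` is a weak subsolution of `div (a ∇u) = 0` in `U`, that is, `div (a ∇u) ≥ 0` when tested
against nonnegative smooth functions with compact support in `U`. -/
def IsWeakSubsolution (a : E → ℝ) (U : Set E) (u : E → ℝ) : Prop :=
  ∀ ψ : E → ℝ, ContDiff ℝ ∞ ψ → HasCompactSupport ψ → tsupport ψ ⊆ U → (∀ x, 0 ≤ ψ x) →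
    ∫ x, a x * ⟪∇ u x, ∇ ψ x⟫ ≤ 0

variable {a u T : E → ℝ} {U : Set E} {K L : ℝ≥0}

theorem locallyIntegrable_smul_gradient (ha : MemLp a ∞) (hu : LipschitzWith K u) :
    LocallyIntegrable fun x ↦ a x • ∇ u x :=
  ((memLp_top_of_bound (measurable_gradient u).aestronglyMeasurable K
    (.of_forall fun _ ↦ norm_gradient_le_of_lipschitzWith hu)).smul ha).locallyIntegrable le_top

theorem integrable_mul_inner_gradient (ha : MemLp a ∞) (hu : LipschitzWith K u)
    (hT : LipschitzWith L T) (hTc : HasCompactSupport T) :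
    Integrable fun x ↦ a x * ⟪∇ u x, ∇ T x⟫ := by
  simpa only [real_inner_smul_left] using
    integrable_inner_gradient (locallyIntegrable_smul_gradient ha hu) hT hTc

namespace IsWeakSolution

theorem integral_eq_zero_of_lipschitzWith (h : IsWeakSolution a U u) (ha : MemLp a ∞)
    (hu : LipschitzWith K u) (hU : IsOpen U) (hT : LipschitzWith L T)
    (hTc : HasCompactSupport T) (hTU : tsupport T ⊆ U) :
    ∫ x, a x * ⟪∇ u x, ∇ T x⟫ = 0 := by
  have hlim :=
    tendsto_integral_inner_gradient_mollify (locallyIntegrable_smul_gradient ha hu) hT hTc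
  simp only [real_inner_smul_left] at hlim
  refine tendsto_nhds_unique hlim (tendsto_const_nhds.congr' ?_)
  filter_upwards [eventually_tsupport_mollify_subset hTc hU hTU] with n hn
  exact (h _ (contDiff_mollify _ hT.continuous.locallyIntegrable) hn.1 hn.2).symm

theorem isWeakSubsolution (h : IsWeakSolution a U u) : IsWeakSubsolution a U u :=
  fun ψ hψ hψc hψU _ ↦ (h ψ hψ hψc hψU).le

theorem mono {b : E → ℝ} {V : Set E} (h : IsWeakSolution a U u) (hVU : V ⊆ U) (hab : EqOn a b V) :
    IsWeakSolution b V u := by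
  intro ψ hψ hψc hψV
  rw [← h ψ hψ hψc (hψV.trans hVU)]
  refine integral_congr_ae (.of_forall fun x ↦ ?_)
  by_cases hx : x ∈ V
  · simp only [hab hx]
  · simp only [gradient_eq_zero_of_notMem_tsupport fun h ↦ hx (hψV h), inner_zero_right, mul_zero]

theorem neg (h : IsWeakSolution a U u) : IsWeakSolution a U (-u) := by
  intro ψ hψ hψc hψU
  have hneg (x : E) : ∇ (-u) x = -∇ u x := by simp only [gradient, fderiv_neg, map_neg]
  simp only [hneg, inner_neg_left, mul_neg, integral_neg, h ψ hψ hψc hψU, neg_zero]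

end IsWeakSolution

theorem IsWeakSubsolution.integral_nonpos_of_lipschitzWith (h : IsWeakSubsolution a U u)
    (ha : MemLp a ∞) (hu : LipschitzWith K u) (hU : IsOpen U) (hT : LipschitzWith L T)
    (hTc : HasCompactSupport T) (hTU : tsupport T ⊆ U) (hT0 : ∀ x, 0 ≤ T x) :
    ∫ x, a x * ⟪∇ u x, ∇ T x⟫ ≤ 0 := by
  have hlim :=
    tendsto_integral_inner_gradient_mollify (locallyIntegrable_smul_gradient ha hu) hT hTc
  simp only [real_inner_smul_left] at hlim
  refine le_of_tendsto hlim ?_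
  filter_upwards [eventually_tsupport_mollify_subset hTc hU hTU] with n hn
  exact h _ (contDiff_mollify _ hT.continuous.locallyIntegrable) hn.1 hn.2 (mollify_nonneg _ hT0)

theorem IsWeakSubsolution.le_of_le_on_frontier [Nontrivial E] (h : IsWeakSubsolution a U u)
    (ha : MemLp a ∞) (hapos : ∀ x ∈ U, 0 < a x) (hu : LipschitzWith K u) (hU : IsOpen U)
    (hb : Bornology.IsBounded U) {M : ℝ} (hM : ∀ x ∈ frontier U, u x ≤ M) :
    ∀ x ∈ U, u x ≤ M := by
  intro x hx
  refine le_of_forall_gt_imp_ge_of_dense fun c hMc ↦ ?_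
  set T := excess U u c
  have hTl : LipschitzWith K T := lipschitzWith_excess hu fun y hy ↦ (hM y hy).trans hMc.le
  have hTU : tsupport T ⊆ U := tsupport_excess_subset hu.continuous hU fun y hy ↦
    (hM y hy).trans_lt hMc
  have hTc : HasCompactSupport T :=
    hb.isCompact_closure.of_isClosed_subset isClosed_closure (hTU.trans subset_closure)
  have hform (y : E) : a y * ⟪∇ u y, ∇ T y⟫ = a y * ‖∇ T y‖ ^ 2 := by
    rw [inner_gradient_excess hu.continuous hU]
  have hgrad (y : E) (hy : y ∉ U) : ∇ T y = 0 :=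
    gradient_eq_zero_of_notMem_tsupport fun hyT ↦ hy (hTU hyT)
  have hnonneg (y : E) : 0 ≤ a y * ⟪∇ u y, ∇ T y⟫ := by
    rw [hform]
    by_cases hy : y ∈ U
    · exact mul_nonneg (hapos y hy).le (sq_nonneg _)
    · simp [hgrad y hy]
  have hzero := (integral_eq_zero_iff_of_nonneg hnonneg
    (integrable_mul_inner_gradient ha hu hTl hTc)).1
    (le_antisymm (h.integral_nonpos_of_lipschitzWith ha hu hU hTl hTc hTU (excess_nonneg c))
      (integral_nonneg hnonneg))
  have hTgrad : ∇ T =ᵐ[volume] 0 := by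
    filter_upwards [hzero] with y hy
    by_cases hyU : y ∈ U
    · rw [hform] at hy
      simpa [(hapos y hyU).ne'] using hy
    · exact hgrad y hyU
  obtain ⟨y, hy⟩ := (ne_univ_iff_exists_notMem U).1 (by
    rintro rfl; exact NormedSpace.unbounded_univ ℝ E hb)
  have hTx : T x = 0 := (eq_of_ae_gradient_eq_zero hTl hTgrad x y).trans
    (indicator_of_notMem hy _)
  simp only [T, excess, indicator_of_mem hx] at hTx
  linarith [le_max_left (u x - c) 0]

end WeakSolution

section Laplacian

variable {E : Type*} [NormedAddCommGroup E] [InnerProductSpace ℝ E] [FiniteDimensional ℝ E]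

theorem laplacian_eq_sum_fderiv_fderiv {ι : Type*} [Fintype ι] (b : OrthonormalBasis ι ℝ E)
    {f : E → ℝ} {x : E} (hf : ContDiffAt ℝ 2 f x) :
    Δ f x = ∑ i, fderiv ℝ (fun y ↦ fderiv ℝ f y (b i)) x (b i) := by
  have hd : DifferentiableAt ℝ (fderiv ℝ f) x :=
    (hf.fderiv_right (m := 1) le_rfl).differentiableAt one_ne_zero
  rw [laplacian_eq_iteratedFDeriv_orthonormalBasis f b]
  refine Finset.sum_congr rfl fun i _ ↦ ?_
  rw [iteratedFDeriv_two_apply, fderiv_clm_apply hd (differentiableAt_const _)]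
  simp

theorem exists_contDiff_hasCompactSupport_eqOn {w : E → ℝ} (hw : ContDiff ℝ 2 w) {s : Set E}
    (hs : Bornology.IsBounded s) :
    ∃ v : E → ℝ, ContDiff ℝ 2 v ∧ HasCompactSupport v ∧ EqOn v w s := by
  obtain ⟨R, hR, hsR⟩ := hs.subset_closedBall_lt 0 0
  let χ : ContDiffBump (0 : E) := ⟨R, R + 1, hR, lt_add_one R⟩
  refine ⟨fun x ↦ χ x * w x, χ.contDiff.mul hw, χ.hasCompactSupport.mul_right, fun x hx ↦ ?_⟩
  simp only [χ.one_of_mem_closedBall (hsR hx), one_mul]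

variable [MeasurableSpace E] [BorelSpace E] {u : E → ℝ} {U : Set E} {K : ℝ≥0}

theorem integral_inner_gradient_eq_neg_integral_laplacian_mul {w ψ : E → ℝ}
    (hw : ContDiff ℝ 2 w) (hψ : ContDiff ℝ 1 ψ) (hψc : HasCompactSupport ψ) :
    ∫ x, ⟪∇ w x, ∇ ψ x⟫ = -∫ x, Δ w x * ψ x := by
  have b := stdOrthonormalBasis ℝ E
  have hwi (i) : ContDiff ℝ 1 fun x ↦ fderiv ℝ w x (b i) :=
    (hw.fderiv_right (m := 1) le_rfl).clm_apply contDiff_const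
  have hd₁ (i) : Integrable fun x ↦ fderiv ℝ w x (b i) * fderiv ℝ ψ x (b i) :=
    ((hwi i).continuous.mul ((hψ.continuous_fderiv one_ne_zero).clm_apply continuous_const))
      |>.integrable_of_hasCompactSupport (hψc.fderiv_apply (𝕜 := ℝ) (b i)).mul_left
  have hd₂ (i) : Integrable fun x ↦ fderiv ℝ (fun y ↦ fderiv ℝ w y (b i)) x (b i) * ψ x :=
    ((((hwi i).continuous_fderiv one_ne_zero).clm_apply continuous_const).mul hψ.continuous)
      |>.integrable_of_hasCompactSupport hψc.mul_left
  calc ∫ x, ⟪∇ w x, ∇ ψ x⟫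
      = ∑ i, ∫ x, fderiv ℝ w x (b i) * fderiv ℝ ψ x (b i) := by
        rw [← integral_finsetSum _ fun i _ ↦ hd₁ i]
        refine integral_congr_ae (.of_forall fun x ↦ ?_)
        refine (b.sum_inner_mul_inner _ _).symm.trans (Finset.sum_congr rfl fun i _ ↦ ?_)
        rw [inner_gradient_left, real_inner_comm, inner_gradient_left]
    _ = ∑ i, -∫ x, fderiv ℝ (fun y ↦ fderiv ℝ w y (b i)) x (b i) * ψ x := by
        refine Finset.sum_congr rfl fun i _ ↦
          integral_mul_fderiv_eq_neg_fderiv_mul_of_integrable (hd₂ i) (hd₁ i) ?_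
          (fun x _ ↦ (hwi i).differentiable one_ne_zero x)
          (fun x _ ↦ hψ.differentiable one_ne_zero x)
        exact ((hwi i).continuous.mul hψ.continuous).integrable_of_hasCompactSupport hψc.mul_left
    _ = -∫ x, Δ w x * ψ x := by
        rw [Finset.sum_neg_distrib, ← integral_finsetSum _ fun i _ ↦ hd₂ i]
        simp only [laplacian_eq_sum_fderiv_fderiv b hw.contDiffAt, Finset.sum_mul]

theorem IsWeakSolution.le_of_laplacian_nonpos [Nontrivial E] (h : IsWeakSolution 1 U u)
    (hu : LipschitzWith K u) (hU : IsOpen U) (hb : Bornology.IsBounded U) {w : E → ℝ}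
    (hw : ContDiff ℝ 2 w) (hΔ : ∀ x ∈ U, Δ w x ≤ 0) (hle : ∀ x ∈ frontier U, u x ≤ w x) :
    ∀ x ∈ U, u x ≤ w x := by
  obtain ⟨v, hv, hvc, hvw⟩ := exists_contDiff_hasCompactSupport_eqOn hw hb.closure
  obtain ⟨D, hD⟩ := hv.lipschitzWith_of_hasCompactSupport hvc two_ne_zero
  have hvΔ : ∀ x ∈ U, Δ v x ≤ 0 := fun x hx ↦
    (laplacian_congr_nhds ((hvw.mono subset_closure).eventuallyEq_of_mem
      (hU.mem_nhds hx))).eq_of_nhds.trans_le (hΔ x hx)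
  have hsub : IsWeakSubsolution 1 U (u - v) := by
    intro ψ hψ hψc hψU hψ0
    obtain ⟨L, hL⟩ := hψ.lipschitzWith_of_hasCompactSupport hψc (by simp)
    have hint {f : E → ℝ} {C : ℝ≥0} (hf : LipschitzWith C f) :
        Integrable fun x ↦ ⟪∇ f x, ∇ ψ x⟫ :=
      integrable_inner_gradient (locallyIntegrable_gradient hf) hL hψc
    have hsplit : ∀ᵐ x, (1 : E → ℝ) x * ⟪∇ (u - v) x, ∇ ψ x⟫
        = ⟪∇ u x, ∇ ψ x⟫ - ⟪∇ v x, ∇ ψ x⟫ := by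
      filter_upwards [hu.ae_differentiableAt] with x hx
      rw [gradient_sub hx (hv.differentiable two_ne_zero x), inner_sub_left, Pi.one_apply, one_mul]
    have hu0 : ∫ x, ⟪∇ u x, ∇ ψ x⟫ = 0 := by simpa using h ψ hψ hψc hψU
    rw [integral_congr_ae hsplit, integral_sub (hint hu) (hint hD), hu0,
      integral_inner_gradient_eq_neg_integral_laplacian_mul hv (hψ.of_le (by simp)) hψc,
      zero_sub, neg_neg]
    refine integral_nonpos fun x ↦ ?_
    by_cases hx : x ∈ U
    · exact mul_nonpos_of_nonpos_of_nonneg (hvΔ x hx) (hψ0 x)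
    · simp [image_eq_zero_of_notMem_tsupport fun hxψ ↦ hx (hψU hxψ)]
  intro x hx
  have := hsub.le_of_le_on_frontier (memLp_top_const 1) (fun _ _ ↦ one_pos) (hu.sub hD) hU hb
    (M := 0) (fun y hy ↦ by simpa [hvw (frontier_subset_closure hy)] using hle y hy) x hx
  simpa [hvw (subset_closure hx)] using this

theorem fderiv_fderiv_mollify_apply (ρ : ContDiffBump (0 : E)) (hu : LipschitzWith K u) (x v : E) :
    fderiv ℝ (fun y ↦ fderiv ℝ (mollify ρ u) y v) x v
      = ∫ y, fderiv ℝ (ρ.normed volume) (x - y) v * ⟪∇ u y, v⟫ := by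
  have hgrad := locallyIntegrable_gradient hu
  have hmol : (fun y ↦ fderiv ℝ (mollify ρ u) y v) = fun y ↦ ⟪v, mollify ρ (∇ u) y⟫ := by
    funext y
    rw [← gradient_mollify ρ hu, real_inner_comm, inner_gradient_left]
  have hint : Integrable fun y ↦ fderiv ℝ (ρ.normed volume) (x - y) v • ∇ u y :=
    hgrad.integrable_smul_left_of_hasCompactSupport
      (((ρ.contDiff_normed (n := 1)).continuous_fderiv one_ne_zero).comp
        (continuous_const.sub continuous_id) |>.clm_apply continuous_const)
      ((ρ.hasCompactSupport_normed.fderiv_apply (𝕜 := ℝ) v).comp_homeomorph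
        (Homeomorph.subLeft x))
  rw [hmol, fderiv_inner_apply ℝ (differentiableAt_const v)
    ((contDiff_mollify ρ hgrad).differentiable (by simp) x), fderiv_fun_const, Pi.zero_apply,
    zero_apply, inner_zero_left, add_zero, fderiv_mollify_apply ρ hgrad,
    ← integral_inner hint]
  refine integral_congr_ae (.of_forall fun y ↦ ?_)
  simp only [real_inner_smul_right, real_inner_comm v]

theorem laplacian_mollify_eq_zero (h : IsWeakSolution 1 U u) (hu : LipschitzWith K u)
    (ρ : ContDiffBump (0 : E)) {x : E} (hx : closedBall x ρ.rOut ⊆ U) :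
    Δ (mollify ρ u) x = 0 := by
  have b := stdOrthonormalBasis ℝ E
  have hρ : ContDiff ℝ ∞ (ρ.normed volume) := ρ.contDiff_normed
  let ψ : E → ℝ := fun y ↦ ρ.normed volume (x - y)
  have hψ : ContDiff ℝ ∞ ψ := hρ.comp (contDiff_const.sub contDiff_id)
  have hψc : HasCompactSupport ψ :=
    ρ.hasCompactSupport_normed.comp_homeomorph (Homeomorph.subLeft x)
  have hψU : tsupport ψ ⊆ U := by
    refine (closure_minimal (fun y hy ↦ ?_) isClosed_closedBall).trans hx
    have hy' : x - y ∈ Function.support (ρ.normed volume) := hy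
    rw [ρ.support_normed_eq, mem_ball_zero_iff, ← dist_eq_norm, dist_comm] at hy'
    exact hy'.le
  have hdψ (y v : E) : fderiv ℝ (ρ.normed volume) (x - y) v = -⟪∇ ψ y, v⟫ := by
    rw [inner_gradient_left, fderiv_comp_const_sub (hρ.differentiable (by simp) _),
      neg_apply, neg_neg]
  have hint (v : E) : Integrable fun y ↦ ⟪∇ ψ y, v⟫ * ⟪∇ u y, v⟫ := by
    have : Integrable fun y ↦ ⟪fderiv ℝ ψ y v • ∇ u y, v⟫ :=
      ((locallyIntegrable_gradient hu).integrable_smul_left_of_hasCompactSupport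
        ((hψ.continuous_fderiv (by simp)).clm_apply continuous_const)
        (hψc.fderiv_apply (𝕜 := ℝ) v)).inner_const v
    simpa only [real_inner_smul_left, inner_gradient_left (f := ψ)] using this
  calc Δ (mollify ρ u) x
      = ∑ i, -∫ y, ⟪∇ ψ y, b i⟫ * ⟪∇ u y, b i⟫ := by
        rw [laplacian_eq_sum_fderiv_fderiv b
          (contDiff_infty.1 (contDiff_mollify ρ hu.continuous.locallyIntegrable) 2).contDiffAt]
        simp only [fderiv_fderiv_mollify_apply ρ hu, hdψ, neg_mul, integral_neg]
    _ = -∫ y, ⟪∇ u y, ∇ ψ y⟫ := by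
        rw [Finset.sum_neg_distrib, ← integral_finsetSum _ fun i _ ↦ hint (b i)]
        refine congrArg _ (integral_congr_ae (.of_forall fun y ↦ ?_))
        refine Eq.trans (Finset.sum_congr rfl fun i _ ↦ ?_) (b.sum_inner_mul_inner _ _)
        rw [mul_comm, real_inner_comm (∇ ψ y)]
    _ = 0 := by simpa using h ψ hψ hψc hψU

end Laplacian

section GradientEstimate

-- The exponential of the normalized holomorphic primitive of `u` is bounded by `e`, so the Schwarz
-- lemma bounds its derivative at `c`, where it takes the value `1`.
theorem norm_fderiv_le_of_harmonicOnNhd_ball {u : ℂ → ℝ} {c : ℂ} {R M m : ℝ} (hR : 0 < R)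
    (hM : 0 < M) (hu : HarmonicOnNhd u (ball c R)) (hb : ∀ z ∈ ball c R, |u z - m| ≤ M) :
    ‖fderiv ℝ u c‖ ≤ 8 * M / R := by
  obtain ⟨F, hF, hFu⟩ := hu.exists_analyticOnNhd_ball_re_eq
  have hc : c ∈ ball c R := mem_ball_self hR
  let G : ℂ → ℂ := fun z ↦ Complex.exp ((F z - F c) / (2 * M : ℝ))
  have hGc : G c = 1 := by simp [G]
  have hGd : DifferentiableOn ℂ G (ball c R) :=
    ((hF.differentiableOn.sub_const _).div_const _).cexp
  have hGb : MapsTo G (ball c R) (closedBall (G c) 4) := fun z hz ↦ by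
    have hosc : u z - u c ≤ 2 * M := by
      linarith [(abs_le.1 (hb z hz)).2, (abs_le.1 (hb c hc)).1]
    have hre : ((F z - F c) / (2 * M : ℝ)).re ≤ 1 := by
      rw [Complex.div_ofReal_re, Complex.sub_re, div_le_one (by positivity)]
      exact (congrArg₂ _ (hFu hz) (hFu hc)).trans_le hosc
    calc dist (G z) (G c) ≤ ‖G z‖ + 1 := by simpa [hGc, dist_eq_norm] using norm_sub_le (G z) 1
      _ ≤ Real.exp 1 + 1 := by rw [Complex.norm_exp]; gcongr
      _ ≤ 4 := by linarith [Real.exp_one_lt_three]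
  have hG' : deriv G c = deriv F c / (2 * M : ℝ) := by
    have := ((((hF c hc).differentiableAt.hasDerivAt).sub_const (F c)).div_const
      ((2 * M : ℝ) : ℂ)).cexp.deriv
    simpa [G] using this
  have hF' : ‖deriv F c‖ ≤ 8 * M / R := by
    have := Complex.norm_deriv_le_div_of_mapsTo_ball hGd hGb hR
    rw [hG', norm_div, Complex.norm_real, Real.norm_of_nonneg (by positivity),
      div_le_iff₀ (by positivity)] at this
    exact this.trans_eq (by ring)
  have hre : HasFDerivAt u _ c := (Complex.reCLM.hasFDerivAt.comp c
    ((hF c hc).differentiableAt.hasDerivAt.hasFDerivAt.restrictScalars ℝ)).congr_of_eventuallyEq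
      (hFu.symm.eventuallyEq_of_mem (isOpen_ball.mem_nhds hc))
  rw [hre.fderiv]
  refine (ContinuousLinearMap.opNorm_le_bound _ (norm_nonneg _) fun v ↦ ?_).trans hF'
  simpa [mul_comm] using Complex.abs_re_le_norm (v * deriv F c)

variable {E : Type*} [NormedAddCommGroup E] [InnerProductSpace ℝ E] [FiniteDimensional ℝ E]

theorem laplacian_comp_linearIsometryEquiv {E' : Type*} [NormedAddCommGroup E']
    [InnerProductSpace ℝ E'] [FiniteDimensional ℝ E'] (L : E' ≃ₗᵢ[ℝ] E) {f : E → ℝ}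
    (hf : ContDiff ℝ 2 f) (x : E') : Δ (f ∘ L) x = Δ f (L x) := by
  have b := stdOrthonormalBasis ℝ E'
  rw [laplacian_eq_iteratedFDeriv_orthonormalBasis _ b,
    laplacian_eq_iteratedFDeriv_orthonormalBasis _ (b.map L)]
  refine Finset.sum_congr rfl fun i _ ↦ ?_
  have hcomp :=
    (L.toContinuousLinearEquiv : E' →L[ℝ] E).iteratedFDeriv_comp_right hf x (i := 2) le_rfl
  refine (congrArg (· ![b i, b i]) hcomp).trans ?_
  rw [ContinuousMultilinearMap.compContinuousLinearMap_apply]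
  congr 1
  funext j
  fin_cases j <;> simp

theorem norm_fderiv_le_of_laplacian_eq_zero (hE : Module.finrank ℝ E = 2) {v : E → ℝ} {c : E}
    {R M m : ℝ} (hR : 0 < R) (hM : 0 < M) (hv : ContDiff ℝ 2 v) (hΔ : ∀ x ∈ ball c R, Δ v x = 0)
    (hb : ∀ x ∈ ball c R, |v x - m| ≤ M) : ‖fderiv ℝ v c‖ ≤ 8 * M / R := by
  let L : ℂ ≃ₗᵢ[ℝ] E :=
    Complex.isometryOfOrthonormal ((stdOrthonormalBasis ℝ E).reindex (finCongr hE))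
  have hball {z : ℂ} (hz : z ∈ ball (L.symm c) R) : L z ∈ ball c R := by
    rwa [mem_ball, ← L.symm.dist_map, L.symm_apply_apply]
  have hharm : HarmonicOnNhd (v ∘ L) (ball (L.symm c) R) := fun z hz ↦
    ⟨(hv.comp L.contDiff).contDiffAt, by
      filter_upwards [isOpen_ball.mem_nhds hz] with y hy
      rw [laplacian_comp_linearIsometryEquiv L hv, hΔ _ (hball hy), Pi.zero_apply]⟩
  have hnorm : ‖fderiv ℝ v c‖ = ‖fderiv ℝ (v ∘ L) (L.symm c)‖ := by
    rw [← L.coe_toContinuousLinearEquiv, ContinuousLinearEquiv.comp_right_fderiv]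
    simp
  exact hnorm.trans_le
    (norm_fderiv_le_of_harmonicOnNhd_ball hR hM hharm fun z hz ↦ hb _ (hball hz))

variable [MeasurableSpace E] [BorelSpace E]

theorem IsWeakSolution.lipschitzOnWith (hE : Module.finrank ℝ E = 2) {u : E → ℝ} {U s : Set E}
    {K : ℝ≥0} {R M m : ℝ} (h : IsWeakSolution 1 U u) (hu : LipschitzWith K u) (hs : Convex ℝ s)
    (hsU : thickening R s ⊆ U) (hR : 0 < R) (hM : 0 < M)
    (hb : ∀ x ∈ thickening R s, |u x - m| ≤ M) :
    LipschitzOnWith (16 * M / R).toNNReal u s := by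
  have hfderiv (ρ : ContDiffBump (0 : E)) (hρ : ρ.rOut < R / 2) {y : E} (hy : y ∈ s) :
      ‖fderiv ℝ (mollify ρ u) y‖ ≤ 16 * M / R := by
    have hsub {x : E} (hx : x ∈ ball y (R / 2)) : closedBall x ρ.rOut ⊆ thickening R s := fun z hz ↦
      mem_thickening_iff.2 ⟨y, hy, by
        linarith [dist_triangle z x y, mem_ball.1 hx, mem_closedBall.1 hz]⟩
    calc ‖fderiv ℝ (mollify ρ u) y‖ ≤ 8 * M / (R / 2) :=
          norm_fderiv_le_of_laplacian_eq_zero hE (half_pos hR) hM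
            (contDiff_infty.1 (contDiff_mollify ρ hu.continuous.locallyIntegrable) 2)
            (fun x hx ↦ laplacian_mollify_eq_zero h hu ρ ((hsub hx).trans hsU)) fun x hx ↦
            dist_mollify_le ρ hu.continuous.aestronglyMeasurable hM.le fun z hz ↦
              hb z (hsub hx (ball_subset_closedBall hz))
      _ = 16 * M / R := by field_simp; norm_num
  refine LipschitzOnWith.of_dist_le_mul fun x hx y hy ↦
    le_of_tendsto ((tendsto_mollify hu.continuous x).dist (tendsto_mollify hu.continuous y)) ?_
  filter_upwards [(tendsto_rOut_shrinkingBump (E := E)).eventually_lt_const (half_pos hR)] with n hn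
  refine (hs.lipschitzOnWith_of_nnnorm_fderiv_le (𝕜 := ℝ) (fun z _ ↦ ?_) fun z hz ↦ ?_).dist_le_mul
    x hx y hy
  · exact (contDiff_mollify _ hu.continuous.locallyIntegrable).differentiable (by simp) z
  · exact NNReal.le_toNNReal_of_coe_le (hfderiv _ hn hz)

end GradientEstimate

section Inversion

variable {E : Type*} [NormedAddCommGroup E] [InnerProductSpace ℝ E] {c x : E} {r : ℝ}

theorem eventually_comp_inversion_eq_zero {f : E → ℝ} (hr : r ≠ 0) (hf : HasCompactSupport f) :
    ∀ᶠ x in 𝓝[≠] c, f (inversion c r x) = 0 := by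
  have hbdd : (tsupport f)ᶜ ∈ Bornology.cobounded E := hf.isCompact.isBounded.compl
  filter_upwards [(tendsto_inversion_nhdsNE_center_cobounded hr).eventually hbdd] with x hx
  exact image_eq_zero_of_notMem_tsupport hx

theorem gradient_comp_inversion [CompleteSpace E] (hr : r ≠ 0) (hx : x ≠ c) (f : E → ℝ) :
    ∇ (f ∘ inversion c r) x
      = (r / dist x c) ^ 2 • (ℝ ∙ (x - c))ᗮ.reflection (∇ f (inversion c r x)) := by
  by_cases hf : DifferentiableAt ℝ f (inversion c r x)
  · refine ext_inner_right ℝ fun v ↦ ?_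
    rw [inner_gradient_left, (hf.hasFDerivAt.comp x (hasFDerivAt_inversion hx)).fderiv,
      real_inner_smul_left, LinearIsometryEquiv.inner_map_eq_flip, Submodule.reflection_symm,
      inner_gradient_left]
    simp
  · have hf' : ¬DifferentiableAt ℝ (f ∘ inversion c r) x := fun h ↦ hf <| by
      have hx' : inversion c r x ≠ c := (inversion_eq_center hr).not.2 hx
      rw [← inversion_inversion c hr x] at h
      have := h.comp _ (hasFDerivAt_inversion (R := r) hx').differentiableAt
      simpa only [Function.comp_assoc, (inversion_involutive c hr).comp_self, Function.comp_id]
        using this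
    rw [gradient_eq_zero_of_not_differentiableAt hf', gradient_eq_zero_of_not_differentiableAt hf,
      map_zero, smul_zero]

variable [FiniteDimensional ℝ E]

theorem exists_contDiff_hasCompactSupport_eqOn_comp_inversion {ψ : E → ℝ} (hr : r ≠ 0)
    (hψ : ContDiff ℝ ∞ ψ) (hψc : HasCompactSupport ψ) {s : Set E} (hs : Bornology.IsBounded s) :
    ∃ v : E → ℝ, ContDiff ℝ 2 v ∧ HasCompactSupport v ∧ EqOn v (ψ ∘ inversion c r) (s \ {c}) := by
  classical
  let w := Function.update (ψ ∘ inversion c r) c 0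
  have hw : ContDiff ℝ ∞ w := contDiff_iff_contDiffAt.2 fun x ↦ by
    obtain rfl | hx := eq_or_ne x c
    · have : w =ᶠ[𝓝 x] 0 := by
        filter_upwards [eventually_nhdsWithin_iff.1 (eventually_comp_inversion_eq_zero hr hψc)]
          with y hy
        by_cases hyc : y = x
        · rw [hyc]; exact Function.update_self ..
        · exact (Function.update_of_ne hyc _ _).trans (hy hyc)
      exact contDiffAt_const.congr_of_eventuallyEq this
    · have hinv : ContDiffAt ℝ ∞ (inversion c r) x :=
        contDiffAt_const.inversion contDiffAt_const (contDiffAt_fun_id (x := x)) hx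
      refine (hψ.contDiffAt.comp x hinv).congr_of_eventuallyEq ?_
      filter_upwards [isOpen_ne.mem_nhds hx] with y hy
      exact Function.update_of_ne hy _ _
  obtain ⟨v, hv, hvc, hvw⟩ := exists_contDiff_hasCompactSupport_eqOn (contDiff_infty.1 hw 2) hs
  exact ⟨v, hv, hvc, fun x hx ↦ (hvw hx.1).trans (Function.update_of_ne hx.2 _ _)⟩

variable [MeasurableSpace E] [BorelSpace E]

-- In dimension two, inversions are conformal and the Dirichlet form is conformally invariant.
theorem setIntegral_image_inversion_inner_gradient (hE : Module.finrank ℝ E = 2) (hr : r ≠ 0)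
    {s : Set E} (hs : MeasurableSet s) (hc : c ∉ s) (f g : E → ℝ) :
    ∫ x in inversion c r '' s, ⟪∇ f x, ∇ g x⟫
      = ∫ x in s, ⟪∇ (f ∘ inversion c r) x, ∇ (g ∘ inversion c r) x⟫ := by
  have hne : ∀ x ∈ s, x ≠ c := fun x hx hxc ↦ hc (hxc ▸ hx)
  rw [integral_image_eq_integral_abs_det_fderiv_smul volume hs
    (fun x hx ↦ (hasFDerivAt_inversion (hne x hx)).hasFDerivWithinAt)
    (inversion_injective c hr).injOn]
  refine setIntegral_congr_fun hs fun x hx ↦ ?_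
  have hdet : |((r / dist x c) ^ 2 • ((ℝ ∙ (x - c))ᗮ.reflection : E →L[ℝ] E)).det|
      = ((r / dist x c) ^ 2) ^ 2 := by
    have hrefl : |((ℝ ∙ (x - c))ᗮ.reflection : E →L[ℝ] E).det| = 1 := by
      rw [ContinuousLinearMap.det]
      exact (congrArg abs (Submodule.det_reflection _)).trans (by simp)
    rw [ContinuousLinearMap.det, ContinuousLinearMap.toLinearMap_smul, LinearMap.det_smul, hE,
      abs_mul, abs_of_nonneg (by positivity)]
    exact (congrArg _ hrefl).trans (mul_one _)
  simp only [hdet, gradient_comp_inversion hr (hne x hx), real_inner_smul_left,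
    real_inner_smul_right, LinearIsometryEquiv.inner_map_map, smul_eq_mul]
  ring

end Inversion

section Fold

variable {E : Type*} [NormedAddCommGroup E] [InnerProductSpace ℝ E] {c x : E} {r : ℝ}

open Classical in
/-- The folding of `E` onto the closed ball of radius `r` centered at `c`: the identity inside the
ball and the inversion in its boundary sphere outside. -/
noncomputable def fold (c : E) (r : ℝ) (x : E) : E :=
  if x ∈ closedBall c r then x else inversion c r x

theorem fold_of_mem (hx : x ∈ closedBall c r) : fold c r x = x := if_pos hx

theorem fold_of_le_dist (hx : r ≤ dist x c) : fold c r x = inversion c r x := by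
  by_cases hxr : x ∈ closedBall c r
  · rw [fold_of_mem hxr, inversion_of_mem_sphere (le_antisymm (mem_closedBall.1 hxr) hx)]
  · exact if_neg hxr

theorem fold_mem_closedBall (hr : 0 ≤ r) (x : E) : fold c r x ∈ closedBall c r := by
  by_cases hx : x ∈ closedBall c r
  · rwa [fold_of_mem hx]
  · have hx' : r < dist x c := not_le.1 hx
    rw [fold_of_le_dist hx'.le, mem_closedBall, dist_inversion_center,
      div_le_iff₀ (hr.trans_lt hx'), sq]
    gcongr

theorem lipschitzWith_fold (hr : 0 < r) : LipschitzWith 1 (fold c r) := by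
  refine lipschitzWith_of_closure_of_closure_compl (V := closedBall c r) ?_ ?_
  · rw [isClosed_closedBall.closure_eq]
    intro x hx y hy
    rw [fold_of_mem hx, fold_of_mem hy, ENNReal.coe_one, one_mul]
  · have hsub : closure (closedBall c r)ᶜ ⊆ {x | r ≤ dist x c} :=
      closure_minimal (fun x hx ↦ (not_le.1 (mt mem_closedBall.2 hx)).le)
        (isClosed_le continuous_const (continuous_id.dist continuous_const))
    refine LipschitzOnWith.of_dist_le_mul fun x hx y hy ↦ ?_
    have hx := hsub hx
    have hy := hsub hy
    have hxc : 0 < dist x c := hr.trans_le hx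
    have hyc : 0 < dist y c := hr.trans_le hy
    rw [fold_of_le_dist hx, fold_of_le_dist hy,
      dist_inversion_inversion (dist_pos.1 hxc) (dist_pos.1 hyc), NNReal.coe_one]
    gcongr
    rw [div_le_one (by positivity), sq]
    exact mul_le_mul hx hy hr.le hxc.le

theorem inversion_image_ball_diff_center (c : E) (hr : 0 < r) :
    inversion c r '' (ball c r \ {c}) = (closedBall c r)ᶜ := by
  rw [(inversion_involutive c hr.ne').image_eq_preimage_symm]
  ext x
  rw [mem_preimage, Set.mem_sdiff, mem_ball, mem_singleton_iff, inversion_eq_center hr.ne',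
    dist_inversion_center, mem_compl_iff, mem_closedBall, not_le]
  constructor
  · rintro ⟨h, hx⟩
    rw [div_lt_iff₀ (dist_pos.2 hx), sq] at h
    exact lt_of_mul_lt_mul_left h hr.le
  · intro h
    have hx : 0 < dist x c := hr.trans h
    refine ⟨?_, dist_pos.1 hx⟩
    rw [div_lt_iff₀ hx, sq]
    gcongr

variable [FiniteDimensional ℝ E] [MeasurableSpace E] [BorelSpace E] {u ψ : E → ℝ} {K L : ℝ≥0}

theorem ball_ae_eq_closedBall (c : E) (hr : r ≠ 0) :
    (ball c r : Set E) =ᵐ[volume] closedBall c r := by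
  rw [← ball_union_sphere]
  exact (union_ae_eq_left_of_ae_eq_empty
    (ae_eq_empty.2 (Measure.addHaar_sphere_of_ne_zero volume c hr))).symm

theorem integral_inner_gradient_comp_fold_eq_add (hE : Module.finrank ℝ E = 2) (hr : 0 < r)
    (hu : LipschitzWith K u) (hψ : LipschitzWith L ψ) (hψc : HasCompactSupport ψ) :
    ∫ x, ⟪∇ (u ∘ fold c r) x, ∇ ψ x⟫
      = (∫ x in ball c r, ⟪∇ u x, ∇ ψ x⟫) + ∫ x in ball c r, ⟪∇ u x, ∇ (ψ ∘ inversion c r) x⟫ := by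
  have hint : Integrable fun x ↦ ⟪∇ (u ∘ fold c r) x, ∇ ψ x⟫ :=
    integrable_inner_gradient (locallyIntegrable_gradient (hu.comp (lipschitzWith_fold hr))) hψ hψc
  have : Nontrivial E := Module.nontrivial_of_finrank_pos (R := ℝ) (by omega)
  have hmeas : MeasurableSet (ball c r \ {c}) := measurableSet_ball.diff (measurableSet_singleton c)
  rw [← integral_add_compl (measurableSet_closedBall (x := c) (ε := r)) hint]
  congr 1
  · rw [← setIntegral_congr_set (ball_ae_eq_closedBall c hr.ne')]
    refine setIntegral_congr_fun measurableSet_ball fun x hx ↦ ?_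
    have heq : u ∘ fold c r =ᶠ[𝓝 x] u := by
      filter_upwards [isOpen_ball.mem_nhds hx] with y hy
      exact congrArg u (fold_of_mem (ball_subset_closedBall hy))
    simp only [heq.gradient_eq]
  · have hball : (ball c r \ {c} : Set E) =ᵐ[volume] ball c r :=
      sdiff_null_ae_eq_self (measure_singleton c)
    rw [← inversion_image_ball_diff_center c hr,
      setIntegral_image_inversion_inner_gradient hE hr.ne' hmeas (fun h ↦ h.2 rfl),
      ← setIntegral_congr_set hball]
    refine setIntegral_congr_fun hmeas fun x hx ↦ ?_
    have heq : (u ∘ fold c r) ∘ inversion c r =ᶠ[𝓝 x] u := by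
      filter_upwards [(isOpen_ball.sdiff isClosed_singleton).mem_nhds hx] with y hy
      have hy' : inversion c r y ∈ (closedBall c r)ᶜ :=
        inversion_image_ball_diff_center c hr ▸ mem_image_of_mem _ hy
      rw [Function.comp_apply, Function.comp_apply, fold_of_le_dist (not_le.1 fun h ↦ hy' h).le,
        inversion_inversion c hr.ne']
    simp only [heq.gradient_eq]

namespace IsWeakSolution

variable {a : E → ℝ} {U : Set E} {κ : ℝ}

theorem setIntegral_inner_gradient_eq_zero_of_eqOn_frontier {V : Set E} {T : E → ℝ}
    (h : IsWeakSolution a U u) (ha : MemLp a ∞) (hu : LipschitzWith K u) (hU : IsOpen U)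
    (hV : IsOpen V) (hVb : Bornology.IsBounded V) (hV0 : volume (frontier V) = 0)
    (hVU : closure V ⊆ U) (hκ : κ ≠ 0) (haκ : EqOn a (fun _ ↦ κ) V)
    (hT : LipschitzOnWith L T (closure V)) (hT0 : EqOn T 0 (frontier V)) :
    ∫ x in V, ⟪∇ u x, ∇ T x⟫ = 0 := by
  have hsupp : tsupport (V.indicator T) ⊆ closure V := closure_mono support_indicator_subset
  have hoff : ∀ᵐ x, x ∉ V → a x * ⟪∇ u x, ∇ (V.indicator T) x⟫ = 0 := by
    filter_upwards [measure_eq_zero_iff_ae_notMem.1 hV0] with x hx hxV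
    rw [hV.frontier_eq] at hx
    rw [gradient_eq_zero_of_notMem_tsupport fun h ↦ hx ⟨hsupp h, hxV⟩, inner_zero_right, mul_zero]
  refine (mul_eq_zero.1 ?_).resolve_left hκ
  rw [← integral_const_mul, ← h.integral_eq_zero_of_lipschitzWith ha hu hU
    (lipschitzWith_indicator_of_frontier hT hT0)
    (hVb.isCompact_closure.of_isClosed_subset isClosed_closure hsupp) (hsupp.trans hVU),
    ← setIntegral_eq_integral_of_ae_compl_eq_zero hoff]
  refine setIntegral_congr_fun hV.measurableSet fun x hx ↦ ?_
  have heq : V.indicator T =ᶠ[𝓝 x] T := by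
    filter_upwards [hV.mem_nhds hx] with y hy using indicator_of_mem hy _
  simp only [haκ hx, heq.gradient_eq]

theorem setIntegral_inner_gradient_comp_inversion [Nontrivial E] (h : IsWeakSolution a U u)
    (ha : MemLp a ∞) (hu : LipschitzWith K u) (hU : IsOpen U) (hr : 0 < r)
    (hcU : closedBall c r ⊆ U) (hκ : κ ≠ 0) (haκ : EqOn a (fun _ ↦ κ) (ball c r))
    (hψ : ContDiff ℝ ∞ ψ) (hψc : HasCompactSupport ψ) :
    ∫ x in ball c r, ⟪∇ u x, ∇ (ψ ∘ inversion c r) x⟫ = ∫ x in ball c r, ⟪∇ u x, ∇ ψ x⟫ := by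
  obtain ⟨v, hv, hvc, hvψ⟩ := exists_contDiff_hasCompactSupport_eqOn_comp_inversion (c := c) hr.ne'
    hψ hψc (isBounded_closedBall (x := c) (r := r))
  obtain ⟨L, hL⟩ := (hv.sub (contDiff_infty.1 hψ 2)).lipschitzWith_of_hasCompactSupport
    (hvc.sub hψc) two_ne_zero
  have hsphere : EqOn (v - ψ) 0 (frontier (ball c r)) := fun x hx ↦ by
    rw [frontier_ball c hr.ne'] at hx
    simp only [Pi.sub_apply, hvψ ⟨sphere_subset_closedBall hx, ne_of_mem_sphere hx hr.ne'⟩,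
      Function.comp_apply, inversion_of_mem_sphere hx, sub_self, Pi.zero_apply]
  have hdiff : ∫ x in ball c r, ⟪∇ u x, ∇ (v - ψ) x⟫ = 0 :=
    h.setIntegral_inner_gradient_eq_zero_of_eqOn_frontier ha hu hU isOpen_ball isBounded_ball
      (by rw [frontier_ball c hr.ne', Measure.addHaar_sphere_of_ne_zero volume c hr.ne'])
      (closure_ball_subset_closedBall.trans hcU) hκ haκ hL.lipschitzOnWith hsphere
  have hG := locallyIntegrable_gradient hu
  obtain ⟨Lv, hLv⟩ := hv.lipschitzWith_of_hasCompactSupport hvc two_ne_zero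
  obtain ⟨Lψ, hLψ⟩ := hψ.lipschitzWith_of_hasCompactSupport hψc (by simp)
  simp only [gradient_sub (hv.differentiable two_ne_zero _) (hψ.differentiable (by simp) _),
    inner_sub_right] at hdiff
  rw [integral_sub (integrable_inner_gradient hG hLv hvc).integrableOn
    (integrable_inner_gradient hG hLψ hψc).integrableOn, sub_eq_zero] at hdiff
  rw [← hdiff]
  have hball : (ball c r \ {c} : Set E) =ᵐ[volume] ball c r :=
    sdiff_null_ae_eq_self (measure_singleton c)
  rw [← setIntegral_congr_set hball, ← setIntegral_congr_set hball]
  refine setIntegral_congr_fun (measurableSet_ball.diff (measurableSet_singleton c)) fun x hx ↦ ?_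
  have heq : v =ᶠ[𝓝 x] ψ ∘ inversion c r := by
    filter_upwards [(isOpen_ball.sdiff isClosed_singleton).mem_nhds hx] with y hy
    exact hvψ ⟨ball_subset_closedBall hy.1, hy.2⟩
  simp only [heq.gradient_eq]

theorem integral_inner_gradient_comp_fold (hE : Module.finrank ℝ E = 2)
    (h : IsWeakSolution a U u) (ha : MemLp a ∞) (hu : LipschitzWith K u) (hU : IsOpen U)
    (hr : 0 < r) (hcU : closedBall c r ⊆ U) (hκ : κ ≠ 0) (haκ : EqOn a (fun _ ↦ κ) (ball c r))
    (hψ : ContDiff ℝ ∞ ψ) (hψc : HasCompactSupport ψ) :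
    ∫ x, ⟪∇ (u ∘ fold c r) x, ∇ ψ x⟫ = 2 * ∫ x in ball c r, ⟪∇ u x, ∇ ψ x⟫ := by
  obtain ⟨L, hL⟩ := hψ.lipschitzWith_of_hasCompactSupport hψc (by simp)
  have : Nontrivial E := Module.nontrivial_of_finrank_pos (R := ℝ) (by omega)
  rw [integral_inner_gradient_comp_fold_eq_add hE hr hu hL hψc,
    h.setIntegral_inner_gradient_comp_inversion ha hu hU hr hcU hκ haκ hψ hψc, two_mul]

end IsWeakSolution

end Fold

section Inclusions

variable {ι E : Type*} [Fintype ι] [NormedAddCommGroup E] {c : ι → E} {r κ : ι → ℝ}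

/-- The conductivity which equals `κ j` in the ball `ball (c j) (r j)`, provided that these balls
are disjoint, and `1` outside all of them. -/
noncomputable def conductivity (c : ι → E) (r κ : ι → ℝ) (x : E) : ℝ :=
  1 + ∑ j, (ball (c j) (r j)).indicator (fun _ ↦ κ j - 1) x

theorem conductivity_of_mem_ball (hd : Pairwise (Disjoint on fun j ↦ ball (c j) (r j))) {i : ι}
    {x : E} (hx : x ∈ ball (c i) (r i)) : conductivity c r κ x = κ i := by
  rw [conductivity, Finset.sum_eq_single i
    (fun j _ hji ↦ indicator_of_notMem (disjoint_right.1 (hd hji) hx) _)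
    (fun h ↦ (h (Finset.mem_univ i)).elim), indicator_of_mem hx, add_sub_cancel]

theorem conductivity_of_forall_notMem_ball {x : E} (hx : ∀ j, x ∉ ball (c j) (r j)) :
    conductivity c r κ x = 1 := by
  rw [conductivity, Finset.sum_eq_zero fun j _ ↦ indicator_of_notMem (hx j) _, add_zero]

theorem conductivity_pos (hd : Pairwise (Disjoint on fun j ↦ ball (c j) (r j)))
    (hκ : ∀ j, 0 < κ j) (x : E) : 0 < conductivity c r κ x := by
  by_cases hx : ∃ j, x ∈ ball (c j) (r j)
  · obtain ⟨j, hj⟩ := hx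
    exact conductivity_of_mem_ball hd hj ▸ hκ j
  · exact conductivity_of_forall_notMem_ball (not_exists.1 hx) ▸ one_pos

variable [InnerProductSpace ℝ E]

/-- The combination `u + ∑ j, (κ j - 1) / 2 • u ∘ fold (c j) (r j)`. In the plane it is harmonic
whenever `u` solves `div (conductivity c r κ ∇u) = 0`: the sources of `u` on the spheres cancel. -/
noncomputable def foldedSum (c : ι → E) (r κ : ι → ℝ) (u : E → ℝ) : E → ℝ :=
  u + ∑ j, ((κ j - 1) / 2) • (u ∘ fold (c j) (r j))

variable {u : E → ℝ} {K : ℝ≥0}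

theorem foldedSum_apply (x : E) :
    foldedSum c r κ u x = u x + ∑ j, (κ j - 1) / 2 * u (fold (c j) (r j) x) := by
  simp [foldedSum]

theorem lipschitzWith_comp_fold {c : E} {r : ℝ} (hr : 0 < r)
    (hu : LipschitzOnWith K u (closedBall c r)) : LipschitzWith K (u ∘ fold c r) := by
  simpa only [mul_one, lipschitzOnWith_univ] using
    hu.comp (lipschitzWith_fold hr).lipschitzOnWith (s := univ) fun x _ ↦
      fold_mem_closedBall hr.le x

theorem lipschitzWith_foldedSum (hr : ∀ j, 0 < r j) (hu : LipschitzWith K u) :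
    LipschitzWith (K + ∑ j, ‖(κ j - 1) / 2‖₊ * K) (foldedSum c r κ u) := by
  rw [funext foldedSum_apply]
  exact hu.add (lipschitzWith_sum_mul fun j _ ↦ lipschitzWith_comp_fold (hr j) hu.lipschitzOnWith)

theorem abs_foldedSum_le {U : Set E} {M : ℝ} (hr : ∀ j, 0 ≤ r j)
    (hcU : ∀ j, closedBall (c j) (r j) ⊆ U) (hM : ∀ x ∈ U, |u x| ≤ M) {x : E} (hx : x ∈ U) :
    |foldedSum c r κ u x| ≤ (1 + ∑ j, |κ j - 1| / 2) * M := by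
  rw [foldedSum_apply, add_mul, one_mul, Finset.sum_mul]
  refine (abs_add_le _ _).trans (add_le_add (hM x hx) ?_)
  refine (Finset.abs_sum_le_sum_abs _ _).trans (Finset.sum_le_sum fun j _ ↦ ?_)
  rw [abs_mul, abs_div, abs_two]
  gcongr
  exact hM _ (hcU j (fold_mem_closedBall (hr j) x))

section LipschitzConstants

variable {N : ℝ≥0} {P : ι → ℝ≥0} {s : Set E}

theorem lipschitzOnWith_of_foldedSum (hr : ∀ j, 0 < r j)
    (hP : ∀ j, LipschitzOnWith (P j) u (closedBall (c j) (r j)))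
    (hs : LipschitzOnWith N (foldedSum c r κ u) s) :
    LipschitzOnWith (N + ∑ j, ‖(κ j - 1) / 2‖₊ * P j) u s := by
  have hsub := hs.sub (lipschitzWith_sum_mul (t := Finset.univ)
    (γ := fun j ↦ (κ j - 1) / 2) fun j _ ↦
    lipschitzWith_comp_fold (hr j) (hP j)).lipschitzOnWith
  simpa only [foldedSum_apply, Function.comp_apply, add_sub_cancel_right] using hsub

-- In `closedBall (c i) (r i)` the summand `u ∘ fold (c i) (r i)` equals `u`, hence the left factor.
theorem mul_le_of_isLeast_lipschitzOnWith [DecidableEq ι] (hr : ∀ j, 0 < r j)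
    (hP : ∀ j, IsLeast {L | LipschitzOnWith L u (closedBall (c j) (r j))} (P j)) {i : ι}
    (hκ : 0 < κ i) (hi : LipschitzOnWith N (foldedSum c r κ u) (closedBall (c i) (r i))) :
    (κ i + 1) / 2 * P i ≤ N + ∑ j ∈ Finset.univ.erase i, |κ j - 1| / 2 * P j := by
  have hα : 0 < (κ i + 1) / 2 := by linarith
  set S : ℝ≥0 := ∑ j ∈ Finset.univ.erase i, ‖(κ j - 1) / 2‖₊ * P j with hS
  have hsub := hi.sub (lipschitzWith_sum_mul (t := Finset.univ.erase i)
    (γ := fun j ↦ (κ j - 1) / 2) fun j _ ↦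
      lipschitzWith_comp_fold (hr j) (hP j).1).lipschitzOnWith
  have hu : ∀ x ∈ closedBall (c i) (r i), foldedSum c r κ u x
      - ∑ j ∈ Finset.univ.erase i, (κ j - 1) / 2 * (u ∘ fold (c j) (r j)) x
      = (κ i + 1) / 2 * u x := fun x hx ↦ by
    rw [foldedSum_apply, ← Finset.add_sum_erase _ _ (Finset.mem_univ i), fold_of_mem hx]
    simp only [Function.comp_apply]
    ring
  have hlip : LipschitzOnWith (Real.toNNReal ((N + S) / ((κ i + 1) / 2))) u
      (closedBall (c i) (r i)) := LipschitzOnWith.of_dist_le_mul fun x hx y hy ↦ by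
    have h := hsub.dist_le_mul x hx y hy
    rw [hu x hx, hu y hy, dist_eq_norm, ← mul_sub, norm_mul, Real.norm_of_nonneg hα.le,
      ← dist_eq_norm, mul_comm, ← le_div_iff₀ hα] at h
    rw [Real.coe_toNNReal _ (by positivity)]
    exact h.trans_eq (by rw [← hS]; push_cast; ring)
  have h := NNReal.coe_le_coe.2 ((hP i).2 hlip)
  rw [Real.coe_toNNReal _ (by positivity), le_div_iff₀ hα, mul_comm] at h
  simpa [hS, abs_div] using h

end LipschitzConstants

variable [FiniteDimensional ℝ E] [MeasurableSpace E] [BorelSpace E]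

theorem memLp_top_conductivity (c : ι → E) (r κ : ι → ℝ) : MemLp (conductivity c r κ) ∞ :=
  (memLp_top_const (1 : ℝ)).add (memLp_finsetSum _ fun j _ ↦
    memLp_indicator_const ∞ measurableSet_ball (κ j - 1) (.inr measure_ball_lt_top.ne))

theorem isWeakSolution_foldedSum {U : Set E} (hE : Module.finrank ℝ E = 2)
    (h : IsWeakSolution (conductivity c r κ) U u) (hu : LipschitzWith K u) (hU : IsOpen U)
    (hr : ∀ j, 0 < r j) (hκ : ∀ j, κ j ≠ 0) (hcU : ∀ j, closedBall (c j) (r j) ⊆ U)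
    (hd : Pairwise (Disjoint on fun j ↦ ball (c j) (r j))) :
    IsWeakSolution 1 U (foldedSum c r κ u) := by
  intro ψ hψ hψc hψU
  obtain ⟨L, hL⟩ := hψ.lipschitzWith_of_hasCompactSupport hψc (by simp)
  have hint {v : E → ℝ} {K' : ℝ≥0} (hv : LipschitzWith K' v) : Integrable fun x ↦ ⟪∇ v x, ∇ ψ x⟫ :=
    integrable_inner_gradient (locallyIntegrable_gradient hv) hL hψc
  have hfold (j : ι) : LipschitzWith (K * 1) (u ∘ fold (c j) (r j)) :=
    hu.comp (lipschitzWith_fold (hr j))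
  have hgrad : ∀ᵐ x, ⟪∇ (foldedSum c r κ u) x, ∇ ψ x⟫
      = ⟪∇ u x, ∇ ψ x⟫ + ∑ j, (κ j - 1) / 2 * ⟪∇ (u ∘ fold (c j) (r j)) x, ∇ ψ x⟫ := by
    filter_upwards [hu.ae_differentiableAt, ae_all_iff.2 fun j ↦ (hfold j).ae_differentiableAt]
      with x hx hxf
    have hderiv : HasFDerivAt (foldedSum c r κ u) (fderiv ℝ u x
        + ∑ j, ((κ j - 1) / 2) • fderiv ℝ (u ∘ fold (c j) (r j)) x) x :=
      hx.hasFDerivAt.add (.sum fun j _ ↦ (hxf j).hasFDerivAt.const_smul _)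
    simp only [inner_gradient_left, hderiv.fderiv, _root_.add_apply, _root_.sum_apply,
      _root_.smul_apply, smul_eq_mul]
  calc ∫ x, (1 : E → ℝ) x * ⟪∇ (foldedSum c r κ u) x, ∇ ψ x⟫
      = (∫ x, ⟪∇ u x, ∇ ψ x⟫) + ∑ j, (κ j - 1) / 2 * ∫ x, ⟪∇ (u ∘ fold (c j) (r j)) x, ∇ ψ x⟫ := by
        simp only [Pi.one_apply, one_mul]
        rw [integral_congr_ae hgrad, integral_add (hint hu)
          (integrable_finsetSum _ fun j _ ↦ (hint (hfold j)).const_mul _),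
          integral_finsetSum _ fun j _ ↦ (hint (hfold j)).const_mul _]
        simp only [integral_const_mul]
    _ = (∫ x, ⟪∇ u x, ∇ ψ x⟫) + ∑ j, (κ j - 1) * ∫ x in ball (c j) (r j), ⟪∇ u x, ∇ ψ x⟫ := by
        congr 1
        refine Finset.sum_congr rfl fun j _ ↦ ?_
        rw [h.integral_inner_gradient_comp_fold hE (memLp_top_conductivity c r κ) hu hU (hr j)
          (hcU j) (hκ j) (fun x hx ↦ conductivity_of_mem_ball hd hx) hψ hψc]
        ring
    _ = ∫ x, conductivity c r κ x * ⟪∇ u x, ∇ ψ x⟫ := by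
        have hmul (j : ι) (x : E) :
            (ball (c j) (r j)).indicator (fun _ ↦ κ j - 1) x * ⟪∇ u x, ∇ ψ x⟫
              = (ball (c j) (r j)).indicator (fun x ↦ (κ j - 1) * ⟪∇ u x, ∇ ψ x⟫) x :=
          (indicator_mul_left _ (fun _ ↦ κ j - 1) fun x ↦ ⟪∇ u x, ∇ ψ x⟫).symm
        simp only [conductivity, add_mul, one_mul, Finset.sum_mul, hmul]
        rw [integral_add (hint hu) (integrable_finsetSum _ fun j _ ↦
          ((hint hu).const_mul _).indicator measurableSet_ball),
          integral_finsetSum _ fun j _ ↦ ((hint hu).const_mul _).indicator measurableSet_ball]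
        simp only [integral_indicator measurableSet_ball, integral_const_mul]
    _ = 0 := h ψ hψ hψc hψU

end Inclusions

section TwoInclusions

variable {E : Type*} [NormedAddCommGroup E] [InnerProductSpace ℝ E]

/-- The factor by which the Lipschitz constant of `u` may exceed that of its folded sum. -/
noncomputable def foldingConstant (κ : Fin 2 → ℝ) : ℝ :=
  4 * max (κ 0) 1 * max (κ 1) 1 / ((κ 0 + 1) * (κ 1 + 1) - |κ 0 - 1| * |κ 1 - 1|)

variable {c : Fin 2 → E} {r κ : Fin 2 → ℝ} {u : E → ℝ} {K N : ℝ≥0} {s : Set E}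

theorem abs_sub_one_lt {t : ℝ} (ht : 0 < t) : |t - 1| < t + 1 :=
  abs_lt.2 ⟨by linarith, by linarith⟩

theorem foldingConstant_pos (hκ : ∀ i, 0 < κ i) : 0 < foldingConstant κ :=
  div_pos (by have := hκ 0; positivity) (sub_pos.2 (mul_lt_mul'' (abs_sub_one_lt (hκ 0))
    (abs_sub_one_lt (hκ 1)) (abs_nonneg _) (abs_nonneg _)))

theorem add_le_foldingConstant_mul {κ : Fin 2 → ℝ} (hκ : ∀ i, 0 < κ i) {N p q : ℝ}
    (hp : (κ 0 + 1) / 2 * p ≤ N + |κ 1 - 1| / 2 * q)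
    (hq : (κ 1 + 1) / 2 * q ≤ N + |κ 0 - 1| / 2 * p) :
    N + (|κ 0 - 1| / 2 * p + |κ 1 - 1| / 2 * q) ≤ foldingConstant κ * N := by
  have hmax (t : ℝ) : 2 * max t 1 = t + 1 + |t - 1| := by
    rw [max_comm, sup_eq_half_smul_add_add_abs_sub' ℝ, smul_eq_mul]
    ring
  have hα := abs_sub_one_lt (hκ 0)
  have hβ := abs_sub_one_lt (hκ 1)
  have hA := abs_nonneg (κ 0 - 1)
  have hB := abs_nonneg (κ 1 - 1)
  rw [foldingConstant, show 4 * max (κ 0) 1 * max (κ 1) 1 = 2 * max (κ 0) 1 * (2 * max (κ 1) 1) by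
    ring, hmax, hmax]
  generalize |κ 0 - 1| = A, |κ 1 - 1| = B, κ 0 + 1 = α, κ 1 + 1 = β at *
  have hD : 0 < α * β - A * B := sub_pos.2 (mul_lt_mul'' hα hβ hA hB)
  have hp' : (α * β - A * B) * p ≤ 2 * (β + B) * N := by
    linarith [mul_le_mul_of_nonneg_left hp (hB.trans hβ.le), mul_le_mul_of_nonneg_left hq hB]
  have hq' : (α * β - A * B) * q ≤ 2 * (α + A) * N := by
    linarith [mul_le_mul_of_nonneg_left hq (hA.trans hα.le), mul_le_mul_of_nonneg_left hp hA]
  rw [div_mul_eq_mul_div ((α + A) * (β + B)), le_div_iff₀ hD]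
  linarith [mul_le_mul_of_nonneg_left hp' hA, mul_le_mul_of_nonneg_left hq' hB]

theorem lipschitzOnWith_foldingConstant_mul (hr : ∀ i, 0 < r i) (hκ : ∀ i, 0 < κ i)
    (hu : LipschitzWith K u)
    (hball : ∀ i, LipschitzOnWith N (foldedSum c r κ u) (closedBall (c i) (r i)))
    (hs : LipschitzOnWith N (foldedSum c r κ u) s) :
    LipschitzOnWith (foldingConstant κ * N).toNNReal u s := by
  choose P hP using fun i ↦ exists_isLeast_lipschitzOnWith
    (hu.lipschitzOnWith (s := closedBall (c i) (r i)))
  refine (lipschitzOnWith_of_foldedSum hr (fun j ↦ (hP j).1) hs).weaken ?_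
  have h₀ := mul_le_of_isLeast_lipschitzOnWith hr hP (hκ 0) (hball 0)
  have h₁ := mul_le_of_isLeast_lipschitzOnWith hr hP (hκ 1) (hball 1)
  rw [show Finset.univ.erase (0 : Fin 2) = {1} from rfl, Finset.sum_singleton] at h₀
  rw [show Finset.univ.erase (1 : Fin 2) = {0} from rfl, Finset.sum_singleton] at h₁
  refine (Real.le_toNNReal_iff_coe_le (mul_nonneg (foldingConstant_pos hκ).le N.2)).2 ?_
  simpa [Fin.sum_univ_two, abs_div] using add_le_foldingConstant_mul hκ h₀ h₁

theorem IsWeakSolution.lipschitzOnWith_of_conductivity [FiniteDimensional ℝ E] [MeasurableSpace E]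
    [BorelSpace E] {U : Set E} {M R : ℝ} (hE : Module.finrank ℝ E = 2)
    (h : IsWeakSolution (conductivity c r κ) U u) (hu : LipschitzWith K u) (hU : IsOpen U)
    (hr : ∀ i, 0 < r i) (hκ : ∀ i, 0 < κ i)
    (hd : Pairwise (Disjoint on fun i ↦ ball (c i) (r i))) (hR : 0 < R)
    (hcU : ∀ i, thickening R (closedBall (c i) (r i)) ⊆ U) (hs : Convex ℝ s)
    (hsU : thickening R s ⊆ U) (hM : 0 < M) (hb : ∀ x ∈ U, |u x| ≤ M) :
    LipschitzOnWith (foldingConstant κ * (16 * ((1 + ∑ i, |κ i - 1| / 2) * M) / R)).toNNReal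
      u s := by
  have hcU' (i : Fin 2) : closedBall (c i) (r i) ⊆ U := (self_subset_thickening hR _).trans (hcU i)
  have hharm := isWeakSolution_foldedSum hE h hu hU hr (fun i ↦ (hκ i).ne') hcU' hd
  have hlip {t : Set E} (ht : Convex ℝ t) (htU : thickening R t ⊆ U) :=
    hharm.lipschitzOnWith hE (lipschitzWith_foldedSum hr hu) ht htU hR
      (M := (1 + ∑ i, |κ i - 1| / 2) * M) (m := 0) (by positivity) fun x hx ↦ by
        simpa only [sub_zero] using abs_foldedSum_le (fun i ↦ (hr i).le) hcU' hb (htU hx)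
  have h := lipschitzOnWith_foldingConstant_mul hr hκ hu
    (fun i ↦ hlip (convex_closedBall _ _) (hcU i)) (hlip hs hsU)
  rwa [Real.coe_toNNReal _ (by positivity)] at h

end TwoInclusions

section Sublevel

variable {X : Type*} [TopologicalSpace X] {f : X → ℝ} {Ω : Set X} {x : X}

theorem eq_zero_of_mem_frontier (hf : Continuous f) (hΩ : Ω = {x | f x < 0})
    (hx : x ∈ frontier Ω) : f x = 0 :=
  frontier_lt_subset_eq hf continuous_const (hΩ ▸ hx)

theorem nonpos_of_mem_closure (hf : Continuous f) (hΩ : Ω = {x | f x < 0})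
    (hx : x ∈ closure Ω) : f x ≤ 0 :=
  closure_lt_subset_le hf continuous_const (hΩ ▸ hx)

theorem mem_frontier_of_eq_zero (hΩ : Ω = {x | f x < 0}) (hx : x ∈ closure Ω) (h : f x = 0) :
    x ∈ frontier Ω := by
  refine ⟨hx, fun hi ↦ ?_⟩
  obtain hlt : f x < 0 := hΩ.subset (interior_subset hi)
  exact hlt.ne h

theorem exists_forall_mem_of_forall_eq_zero {S V : Set X} (hS : IsCompact S) (hf : Continuous f)
    (hf0 : ∀ x ∈ S, f x ≤ 0) (hV : IsOpen V) (hSV : ∀ x ∈ S, f x = 0 → x ∈ V) :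
    ∃ ε > 0, ∀ x ∈ S, -ε < f x → x ∈ V := by
  obtain ⟨ε, hε, h⟩ := (hS.diff hV).exists_forall_le' hf.neg.continuousOn (a := 0) fun x hx ↦
    neg_pos.2 ((hf0 x hx.1).lt_of_ne fun h ↦ hx.2 (hSV x hx.1 h))
  exact ⟨ε, hε, fun x hxS hx ↦ by_contra fun hxV ↦ (neg_lt.1 hx).not_ge (h x ⟨hxS, hxV⟩)⟩

end Sublevel

section Barrier

variable {E : Type*} [NormedAddCommGroup E] [InnerProductSpace ℝ E] [FiniteDimensional ℝ E]
  {f φ u : E → ℝ} {Ω U : Set E} {x : E}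

theorem continuous_laplacian (hf : ContDiff ℝ 2 f) : Continuous (Δ f) := by
  rw [laplacian_eq_iteratedFDeriv_stdOrthonormalBasis]
  have := hf.continuous_iteratedFDeriv le_rfl
  fun_prop

theorem laplacian_sq (hf : ContDiff ℝ 2 f) :
    Δ (fun y ↦ f y ^ 2) x = 2 * (‖fderiv ℝ f x‖ ^ 2 + f x * Δ f x) := by
  have hf₁ : Differentiable ℝ f := hf.differentiable (by simp)
  have hfb (i) : Differentiable ℝ fun y ↦ fderiv ℝ f y (stdOrthonormalBasis ℝ E i) :=
    ((hf.fderiv_right (m := 1) le_rfl).clm_apply contDiff_const).differentiable (by simp)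
  rw [laplacian_eq_sum_fderiv_fderiv (stdOrthonormalBasis ℝ E) (hf.pow 2).contDiffAt,
    laplacian_eq_sum_fderiv_fderiv (stdOrthonormalBasis ℝ E) hf.contDiffAt,
    (stdOrthonormalBasis ℝ E).norm_dual, Finset.mul_sum, ← Finset.sum_add_distrib, Finset.mul_sum]
  refine Finset.sum_congr rfl fun i _ ↦ ?_
  have hsq (y : E) : fderiv ℝ (fun y ↦ f y ^ 2) y (stdOrthonormalBasis ℝ E i)
      = 2 * (f y * fderiv ℝ f y (stdOrthonormalBasis ℝ E i)) := by
    rw [((hf₁ y).hasFDerivAt.pow 2).fderiv]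
    simp [mul_assoc]
  simp only [hsq]
  rw [fderiv_const_mul ((hf₁ x).fun_mul (hfb i x)), fderiv_fun_mul (hf₁ x) (hfb i x)]
  simp only [_root_.add_apply, _root_.smul_apply, smul_eq_mul]
  ring

theorem laplacian_neg_sub_smul_sq (hf : ContDiff ℝ 2 f) (B : ℝ) :
    Δ (-f - B • fun y ↦ f y ^ 2) x
      = -Δ f x - B * (2 * (‖fderiv ℝ f x‖ ^ 2 + f x * Δ f x)) := by
  have hneg : ContDiff ℝ 2 (-f) := hf.neg
  have hsq : ContDiff ℝ 2 fun y ↦ f y ^ 2 := hf.pow 2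
  have hBsq : ContDiff ℝ 2 (B • fun y ↦ f y ^ 2) := hsq.const_smul B
  rw [hneg.contDiffAt.laplacian_sub hBsq.contDiffAt, laplacian_neg,
    laplacian_smul _ hsq.contDiffAt, laplacian_sq hf, Pi.neg_apply, smul_eq_mul]

theorem exists_forall_laplacian_neg_sub_smul_sq_lt {S : Set E} (hS : IsCompact S)
    (hf : ContDiff ℝ 2 f) (hf0 : ∀ x ∈ S, f x = 0) (hne : ∀ x ∈ S, fderiv ℝ f x ≠ 0) :
    ∃ B : ℝ, 0 ≤ B ∧ ∀ x ∈ S, Δ (-f - B • fun y ↦ f y ^ 2) x < -1 := by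
  have hpos (x : E) (hx : x ∈ S) : 0 < ‖fderiv ℝ f x‖ ^ 2 :=
    pow_pos (norm_pos_iff.2 (hne x hx)) 2
  have hcont : ContinuousOn (fun x ↦ (2 - Δ f x) / ‖fderiv ℝ f x‖ ^ 2) S :=
    (continuous_const.sub (continuous_laplacian hf)).continuousOn.div
      ((hf.continuous_fderiv (by simp)).norm.pow 2).continuousOn fun x hx ↦ (hpos x hx).ne'
  obtain ⟨C, hC⟩ := hS.exists_bound_of_continuousOn hcont
  refine ⟨|C|, abs_nonneg C, fun x hx ↦ ?_⟩
  have h := ((le_abs_self _).trans (hC x hx)).trans (le_abs_self C)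
  rw [div_le_iff₀ (hpos x hx)] at h
  rw [laplacian_neg_sub_smul_sq hf, hf0 x hx]
  linarith [mul_nonneg (abs_nonneg C) (hpos x hx).le]

-- The barrier is `-f - B * f ^ 2`: on `frontier Ω` the contribution `-2 * B * ‖fderiv ℝ f x‖ ^ 2`
-- of the square to the Laplacian dominates `-Δ f` as soon as `B` is large.
theorem exists_barrier (hΩ : Ω = {x | f x < 0}) (hΩb : Bornology.IsBounded Ω)
    (hf : ContDiff ℝ 2 f) (hne : ∀ x ∈ frontier Ω, fderiv ℝ f x ≠ 0) (hU : IsOpen U)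
    (hfU : frontier Ω ⊆ U) :
    ∃ β : E → ℝ, ContDiff ℝ 2 β ∧ ∃ ε > 0, ∀ x ∈ closure Ω, -ε ≤ f x →
      x ∈ U ∧ Δ β x ≤ -1 ∧ |f x| / 2 ≤ β x ∧ β x ≤ |f x| := by
  obtain ⟨B, hB, hBfr⟩ := exists_forall_laplacian_neg_sub_smul_sq_lt
    (hΩb.isCompact_closure.of_isClosed_subset isClosed_frontier frontier_subset_closure) hf
    (fun x ↦ eq_zero_of_mem_frontier hf.continuous hΩ) hne
  set β : E → ℝ := -f - B • fun x ↦ f x ^ 2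
  have hβ : ContDiff ℝ 2 β := hf.neg.sub ((hf.pow 2).const_smul B)
  have hf0 (x : E) (hx : x ∈ closure Ω) := nonpos_of_mem_closure hf.continuous hΩ hx
  have hV : IsOpen (U ∩ {x | Δ β x < -1} ∩ {x | B * |f x| < 1 / 2}) :=
    (hU.inter (isOpen_lt (continuous_laplacian hβ) continuous_const)).inter
      (isOpen_lt (hf.continuous.abs.const_mul B) continuous_const)
  obtain ⟨ε, hε, hεV⟩ := exists_forall_mem_of_forall_eq_zero hΩb.isCompact_closure hf.continuous
    hf0 hV fun x hx h ↦
      have hfr := mem_frontier_of_eq_zero hΩ hx h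
      ⟨⟨hfU hfr, hBfr x hfr⟩, by simp [h]⟩
  refine ⟨β, hβ, ε / 2, half_pos hε, fun x hx hxf ↦ ?_⟩
  obtain ⟨⟨hxU, hxΔ⟩, hxB⟩ := hεV x hx (by linarith)
  have hβx : β x = |f x| - B * |f x| * |f x| := by
    simp [β, abs_of_nonpos (hf0 x hx), sq, mul_assoc]
  have hmul := mul_le_mul_of_nonneg_right (le_of_lt hxB) (abs_nonneg (f x))
  refine ⟨hxU, le_of_lt hxΔ, ?_, ?_⟩ <;> rw [hβx]
  · linarith
  · exact sub_le_self _ (by positivity)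

variable [Nontrivial E] [MeasurableSpace E] [BorelSpace E] {K : ℝ≥0} {A : ℝ}

theorem IsWeakSolution.le_add_mul_of_laplacian_le (h : IsWeakSolution 1 U u)
    (hu : LipschitzWith K u) (hU : IsOpen U) (hb : Bornology.IsBounded U) (hφ : ContDiff ℝ 2 φ)
    (hf : ContDiff ℝ 2 f) (hA : 0 ≤ A) (hΔφ : ∀ x ∈ U, Δ φ x ≤ A) (hΔf : ∀ x ∈ U, Δ f x ≤ -1)
    (hle : ∀ x ∈ frontier U, u x ≤ φ x + A * f x) : ∀ x ∈ U, u x ≤ φ x + A * f x := by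
  have hAf : ContDiff ℝ 2 (A • f) := hf.const_smul A
  refine h.le_of_laplacian_nonpos hu hU hb (hφ.add hAf) (fun x hx ↦ ?_) hle
  have hΔ : Δ (φ + A • f) x = Δ φ x + A * Δ f x := by
    rw [hφ.contDiffAt.laplacian_add hAf.contDiffAt, laplacian_smul _ hf.contDiffAt, smul_eq_mul]
  exact hΔ.trans_le (by linarith [hΔφ x hx, mul_le_mul_of_nonneg_left (hΔf x hx) hA])

theorem IsWeakSolution.le_add_mul_abs_of_barrier {β : E → ℝ} {ε : ℝ}
    (h : IsWeakSolution 1 (Ω ∩ U) u) (hu : LipschitzWith K u) (hΩ : Ω = {x | f x < 0})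
    (hΩb : Bornology.IsBounded Ω) (hf : Continuous f) (hφ : ContDiff ℝ 2 φ) (hβ : ContDiff ℝ 2 β)
    (hbar : ∀ x ∈ closure Ω, -ε ≤ f x → x ∈ U ∧ Δ β x ≤ -1 ∧ |f x| / 2 ≤ β x ∧ β x ≤ |f x|)
    (hA : 0 ≤ A) (hΔφ : ∀ x ∈ Ω, Δ φ x ≤ A) (hfar : ∀ x ∈ Ω, u x ≤ φ x + A * (ε / 2))
    (huφ : EqOn u φ (frontier Ω)) : ∀ x ∈ Ω, u x ≤ φ x + A * |f x| := by
  have hfar' {x : E} (hx : x ∈ Ω) {t : ℝ} (ht : ε / 2 ≤ t) : u x ≤ φ x + A * t :=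
    (hfar x hx).trans (by gcongr)
  set V := Ω ∩ {x | -ε < f x}
  have hV {x : E} (hx : x ∈ V) := hbar x (subset_closure hx.1) (le_of_lt hx.2)
  have hVo : IsOpen V := (hΩ ▸ isOpen_lt hf continuous_const).inter
    (isOpen_lt continuous_const hf)
  have hfr (x : E) (hx : x ∈ frontier V) : u x ≤ φ x + A * β x := by
    have hxΩ : x ∈ closure Ω := closure_mono inter_subset_left hx.1
    have hxε : -ε ≤ f x :=
      closure_lt_subset_le continuous_const hf (closure_mono inter_subset_right hx.1)
    have hβx : |f x| / 2 ≤ β x := (hbar x hxΩ hxε).2.2.1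
    by_cases hmem : x ∈ Ω
    · have hxε' : f x ≤ -ε := not_lt.1 fun hlt ↦ (hVo.frontier_eq ▸ hx).2 ⟨hmem, hlt⟩
      exact hfar' hmem (by linarith [neg_le_abs (f x)])
    · rw [huφ ⟨hxΩ, fun hi ↦ hmem (interior_subset hi)⟩]
      exact le_add_of_nonneg_right (mul_nonneg hA (le_trans (by positivity) hβx))
  intro x hx
  rcases lt_or_ge (-ε) (f x) with hxf | hxf
  · have hwV : IsWeakSolution 1 V u := h.mono (fun y hy ↦ ⟨hy.1, (hV hy).1⟩) fun _ _ ↦ rfl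
    refine (hwV.le_add_mul_of_laplacian_le hu hVo (hΩb.subset inter_subset_left) hφ hβ hA
      (fun y hy ↦ hΔφ y hy.1) (fun y hy ↦ (hV hy).2.1) hfr x ⟨hx, hxf⟩).trans ?_
    gcongr
    exact (hV ⟨hx, hxf⟩).2.2.2
  · have hε : ε ≤ |f x| := (le_neg.1 hxf).trans (neg_le_abs (f x))
    exact hfar' hx (by linarith [abs_nonneg (f x)])

theorem exists_forall_le_add_mul_abs (hΩ : Ω = {x | f x < 0}) (hΩb : Bornology.IsBounded Ω)
    (hf : ContDiff ℝ 2 f) (hne : ∀ x ∈ frontier Ω, fderiv ℝ f x ≠ 0) (hU : IsOpen U)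
    (hfU : frontier Ω ⊆ U) (hφ : ContDiff ℝ 2 φ) (M : ℝ) :
    ∃ A ≥ 0, ∀ (u : E → ℝ) (K : ℝ≥0), LipschitzWith K u → EqOn u φ (frontier Ω) →
      (∀ x ∈ Ω, u x ≤ M) → IsWeakSolution 1 (Ω ∩ U) u → ∀ x ∈ Ω, u x ≤ φ x + A * |f x| := by
  obtain ⟨β, hβ, ε, hε, hbar⟩ := exists_barrier hΩ hΩb hf hne hU hfU
  obtain ⟨D, hD⟩ := hΩb.isCompact_closure.exists_bound_of_continuousOn
    (continuous_laplacian hφ).continuousOn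
  obtain ⟨N, hN⟩ := hΩb.isCompact_closure.exists_bound_of_continuousOn hφ.continuous.continuousOn
  set A := max |D| (|M + N| * (2 / ε))
  have hA : 0 ≤ A := (abs_nonneg D).trans (le_max_left ..)
  refine ⟨A, hA, fun u K hu huφ huM hw ↦ hw.le_add_mul_abs_of_barrier hu hΩ hΩb hf.continuous hφ hβ
    hbar hA (fun x hx ↦ ?_) (fun x hx ↦ ?_) huφ⟩
  · exact (le_abs_self _).trans <| (hD x (subset_closure hx)).trans <|
      (le_abs_self D).trans (le_max_left ..)
  · have hMN : |M + N| ≤ A * (ε / 2) := calc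
      |M + N| = |M + N| * (2 / ε) * (ε / 2) := by field_simp
      _ ≤ A * (ε / 2) := by
        gcongr
        exact le_max_right ..
    linarith [huM x hx, (abs_le.1 (hN x (subset_closure hx))).1, le_abs_self (M + N)]

theorem exists_forall_abs_sub_le_mul_dist (hΩ : Ω = {x | f x < 0}) (hΩb : Bornology.IsBounded Ω)
    (hf : ContDiff ℝ 2 f) (hne : ∀ x ∈ frontier Ω, fderiv ℝ f x ≠ 0) (hU : IsOpen U)
    (hfU : frontier Ω ⊆ U) (hφ : ContDiff ℝ 2 φ) (M : ℝ) :
    ∃ A > 0, ∀ (u : E → ℝ) (K : ℝ≥0), LipschitzWith K u → EqOn u φ (frontier Ω) →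
      (∀ x ∈ Ω, |u x| ≤ M) → IsWeakSolution 1 (Ω ∩ U) u →
      ∀ x ∈ Ω, ∀ y ∈ frontier Ω, |u x - φ y| ≤ A * dist x y := by
  obtain ⟨A₁, hA₁, h₁⟩ := exists_forall_le_add_mul_abs hΩ hΩb hf hne hU hfU hφ M
  obtain ⟨A₂, hA₂, h₂⟩ := exists_forall_le_add_mul_abs hΩ hΩb hf hne hU hfU hφ.neg M
  have hlip {g : E → ℝ} (hg : ContDiff ℝ 2 g) : ∃ L, LipschitzOnWith L g (closure Ω) :=
    (hg.of_le one_le_two).locallyLipschitz.locallyLipschitzOn.exists_lipschitzOnWith_of_compact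
      hΩb.isCompact_closure
  obtain ⟨Lf, hLf⟩ := hlip hf
  obtain ⟨Lφ, hLφ⟩ := hlip hφ
  refine ⟨(A₁ + A₂) * Lf + Lφ + 1, by positivity, fun u K hu huφ huM hw x hx y hy ↦ ?_⟩
  have hx' : x ∈ closure Ω := subset_closure hx
  have hy' : y ∈ closure Ω := frontier_subset_closure hy
  have hfx : |f x| ≤ Lf * dist x y := by
    simpa only [Real.dist_eq, eq_zero_of_mem_frontier hf.continuous hΩ hy, sub_zero] using
      hLf.dist_le_mul x hx' y hy'
  have hφx : |φ x - φ y| ≤ Lφ * dist x y := hLφ.dist_le_mul x hx' y hy'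
  have hupper : u x ≤ φ x + A₁ * |f x| :=
    h₁ u K hu huφ (fun z hz ↦ (abs_le.1 (huM z hz)).2) hw x hx
  have hlower : -u x ≤ -φ x + A₂ * |f x| :=
    h₂ (-u) K hu.neg (fun z hz ↦ congrArg Neg.neg (huφ hz))
      (fun z hz ↦ neg_le.1 (abs_le.1 (huM z hz)).1) hw.neg x hx
  have hux : |u x - φ x| ≤ (A₁ + A₂) * |f x| := by
    have := mul_nonneg hA₁ (abs_nonneg (f x))
    have := mul_nonneg hA₂ (abs_nonneg (f x))
    exact abs_le.2 ⟨by linarith, by linarith⟩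
  calc |u x - φ y| ≤ |u x - φ x| + |φ x - φ y| := abs_sub_le ..
    _ ≤ (A₁ + A₂) * (Lf * dist x y) + Lφ * dist x y :=
        add_le_add (hux.trans (by gcongr)) hφx
    _ ≤ ((A₁ + A₂) * Lf + Lφ + 1) * dist x y := by linarith [dist_nonneg (x := x) (y := y)]

end Barrier

section GlobalBound

section DistanceToFrontier

theorem infDist_frontier_pos {X : Type*} [PseudoMetricSpace X] {Ω : Set X} {x : X} (hΩ : IsOpen Ω)
    (hne : (frontier Ω).Nonempty) (hx : x ∈ Ω) : 0 < infDist x (frontier Ω) :=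
  (isClosed_frontier.notMem_iff_infDist_pos hne).1 fun h ↦ (hΩ.frontier_eq ▸ h).2 hx

variable {E : Type*} [NormedAddCommGroup E] [NormedSpace ℝ E] {Ω s : Set E} {R : ℝ} {x : E}

theorem ball_subset_of_le_infDist_frontier (hx : x ∈ Ω) (hR : R ≤ infDist x (frontier Ω)) :
    ball x R ⊆ Ω := by
  intro y hy
  by_contra hyΩ
  obtain ⟨p, hp, hpΩ⟩ := inter_frontier_nonempty_of_isPreconnected
    (convex_ball x R).isPreconnected ⟨x, mem_ball_self (dist_nonneg.trans_lt hy), hx⟩ ⟨y, hy, hyΩ⟩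
  exact ((infDist_le_dist_of_mem hpΩ).trans_lt (mem_ball'.1 hp)).not_ge hR

theorem thickening_subset_of_le_infDist_frontier (hsΩ : s ⊆ Ω)
    (hR : ∀ x ∈ s, R ≤ infDist x (frontier Ω)) : thickening R s ⊆ Ω := by
  rw [thickening_eq_biUnion_ball]
  exact iUnion₂_subset fun x hx ↦ ball_subset_of_le_infDist_frontier (hsΩ hx) (hR x hx)

end DistanceToFrontier

variable {E : Type*} [NormedAddCommGroup E] [InnerProductSpace ℝ E] [FiniteDimensional ℝ E]
  [MeasurableSpace E] [BorelSpace E] {Ω U : Set E} {u φ f : E → ℝ} {K : ℝ≥0}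

theorem IsWeakSolution.abs_le_of_abs_le_on_frontier [Nontrivial E] {a : E → ℝ} {M : ℝ}
    (h : IsWeakSolution a U u) (ha : MemLp a ∞) (hapos : ∀ x ∈ U, 0 < a x)
    (hu : LipschitzWith K u) (hU : IsOpen U) (hUb : Bornology.IsBounded U)
    (hM : ∀ x ∈ frontier U, |u x| ≤ M) : ∀ x ∈ U, |u x| ≤ M := fun x hx ↦
  abs_le'.2 ⟨h.isWeakSubsolution.le_of_le_on_frontier ha hapos hu hU hUb
      (fun y hy ↦ (abs_le'.1 (hM y hy)).1) x hx,
    h.neg.isWeakSubsolution.le_of_le_on_frontier ha hapos hu.neg hU hUb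
      (fun y hy ↦ (abs_le'.1 (hM y hy)).2) x hx⟩

theorem IsWeakSolution.lipschitzOnWith_ball_of_abs_sub_le_mul_dist {A σ : ℝ} {z : E}
    (hE : Module.finrank ℝ E = 2)
    (h : IsWeakSolution 1 (Ω ∩ {x | infDist x (frontier Ω) < σ}) u) (hu : LipschitzWith K u)
    (hA : 0 < A) (hb : ∀ x ∈ Ω, ∀ y ∈ frontier Ω, |u x - φ y| ≤ A * dist x y) (hz : z ∈ Ω)
    (hd : 0 < infDist z (frontier Ω)) (hdσ : 2 * infDist z (frontier Ω) ≤ σ) :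
    LipschitzOnWith (64 * A).toNNReal u (ball z (infDist z (frontier Ω) / 2)) := by
  have hne : (frontier Ω).Nonempty := nonempty_iff_ne_empty.2 fun h0 ↦ by simp [h0] at hd
  obtain ⟨y, hy, hzy⟩ := isClosed_frontier.exists_infDist_eq_dist hne z
  have hball := ball_subset_of_le_infDist_frontier hz le_rfl
  set d := infDist z (frontier Ω)
  have hdist : ∀ x ∈ ball z d, dist x y < 2 * d := fun x hx ↦ by
    linarith [dist_triangle x z y, mem_ball.1 hx]
  have hthick : thickening (d / 2) (ball z (d / 2)) ⊆ ball z d :=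
    (Metric.thickening_ball ..).trans_eq (by rw [add_halves])
  have hlip := h.lipschitzOnWith hE hu (convex_ball z (d / 2)) (R := d / 2) (m := φ y)
    (M := 2 * A * d)
    (hthick.trans fun x hx ↦
      ⟨hball hx, (infDist_le_dist_of_mem hy).trans_lt ((hdist x hx).trans_le hdσ)⟩)
    (half_pos hd) (by positivity) fun x hx ↦ by
      linarith [hb x (hball (hthick hx)) y hy,
        mul_le_mul_of_nonneg_left (hdist x (hthick hx)).le hA.le]
  convert hlip using 2
  field_simp
  norm_num

theorem IsWeakSolution.lipschitzOnWith_ball_of_le_infDist_frontier {c : Fin 2 → E}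
    {r κ : Fin 2 → ℝ} {M σ : ℝ} {z : E} (hE : Module.finrank ℝ E = 2)
    (h : IsWeakSolution (conductivity c r κ) Ω u) (hu : LipschitzWith K u) (hΩ : IsOpen Ω)
    (hr : ∀ i, 0 < r i) (hκ : ∀ i, 0 < κ i)
    (hd : Pairwise (Disjoint on fun i ↦ ball (c i) (r i))) (hσ : 0 < σ)
    (hc : ∀ i, closedBall (c i) (r i) ⊆ {x ∈ Ω | σ ≤ infDist x (frontier Ω)}) (hM : 0 < M)
    (hb : ∀ x ∈ Ω, |u x| ≤ M) (hz : z ∈ Ω) (hzσ : σ / 2 ≤ infDist z (frontier Ω)) :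
    LipschitzOnWith
      (foldingConstant κ * (16 * ((1 + ∑ i, |κ i - 1| / 2) * M) / (σ / 4))).toNNReal
      u (ball z (σ / 4)) :=
  h.lipschitzOnWith_of_conductivity hE hu hΩ hr hκ hd (by positivity)
    (fun i ↦ thickening_subset_of_le_infDist_frontier (fun x hx ↦ (hc i hx).1) fun x hx ↦
      (by linarith : σ / 4 ≤ σ).trans (hc i hx).2) (convex_ball z (σ / 4))
    ((Metric.thickening_ball ..).trans (ball_subset_of_le_infDist_frontier hz (by linarith))) hM hb

theorem exists_forall_norm_fderiv_le_of_conductivity (hE : Module.finrank ℝ E = 2)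
    (hΩ : Ω = {x | f x < 0}) (hΩb : Bornology.IsBounded Ω) (hf : ContDiff ℝ 2 f)
    (hne : ∀ x ∈ frontier Ω, fderiv ℝ f x ≠ 0) (hφ : ContDiff ℝ 2 φ) {σ : ℝ} (hσ : 0 < σ)
    {κ : Fin 2 → ℝ} (hκ : ∀ i, 0 < κ i) :
    ∃ C > 0, ∀ (c : Fin 2 → E) (r : Fin 2 → ℝ), (∀ i, 0 < r i) →
      Pairwise (Disjoint on fun i ↦ ball (c i) (r i)) →
      (∀ i, closedBall (c i) (r i) ⊆ {x ∈ Ω | σ ≤ infDist x (frontier Ω)}) →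
      ∀ (u : E → ℝ) (K : ℝ≥0), LipschitzWith K u → EqOn u φ (frontier Ω) →
        IsWeakSolution (conductivity c r κ) Ω u → ∀ z ∈ Ω, ‖fderiv ℝ u z‖ ≤ C := by
  have : Nontrivial E := Module.nontrivial_of_finrank_pos (R := ℝ) (by omega)
  have hΩo : IsOpen Ω := hΩ ▸ isOpen_lt hf.continuous continuous_const
  have hΓ : IsCompact (frontier Ω) :=
    hΩb.isCompact_closure.of_isClosed_subset isClosed_frontier frontier_subset_closure
  obtain ⟨M, hM0, hM⟩ := (hΓ.image hφ.continuous).isBounded.exists_pos_norm_le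
  obtain ⟨A, hA0, hA⟩ := exists_forall_abs_sub_le_mul_dist hΩ hΩb hf hne
    (isOpen_lt (continuous_infDist_pt (frontier Ω)) continuous_const)
    (fun x hx ↦ (infDist_zero_of_mem hx).trans_lt hσ) hφ M
  set N := foldingConstant κ * (16 * ((1 + ∑ i, |κ i - 1| / 2) * M) / (σ / 4))
  refine ⟨max (64 * A) N, lt_max_of_lt_left (by positivity),
    fun c r hr hd hcΩ u K hu huφ h z hz ↦ ?_⟩
  have huM : ∀ x ∈ Ω, |u x| ≤ M := h.abs_le_of_abs_le_on_frontier (memLp_top_conductivity c r κ)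
    (fun x _ ↦ conductivity_pos hd hκ x) hu hΩo hΩb fun x hx ↦
      huφ hx ▸ hM _ (mem_image_of_mem φ hx)
  rcases lt_or_ge (infDist z (frontier Ω)) (σ / 2) with hzσ | hzσ
  · have hcollar : IsWeakSolution 1 (Ω ∩ {x | infDist x (frontier Ω) < σ}) u :=
      h.mono inter_subset_left fun x hx ↦ conductivity_of_forall_notMem_ball fun i hi ↦
        (hcΩ i (ball_subset_closedBall hi)).2.not_gt hx.2
    have hz0 : 0 < infDist z (frontier Ω) := by
      refine infDist_frontier_pos hΩo (nonempty_iff_ne_empty.2 fun h0 ↦ ?_) hz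
      have := (hcΩ 0 (mem_closedBall_self (hr 0).le)).2
      rw [h0, infDist_empty] at this
      linarith
    refine (norm_fderiv_le_of_lipschitzOn ℝ (ball_mem_nhds z (half_pos hz0))
      (hcollar.lipschitzOnWith_ball_of_abs_sub_le_mul_dist hE hu hA0 (hA u K hu huφ huM hcollar)
        hz hz0 (by linarith))).trans ?_
    rw [Real.coe_toNNReal _ (by positivity)]
    exact le_max_left _ _
  · have hN : 0 < N := mul_pos (foldingConstant_pos hκ) (by positivity)
    refine (norm_fderiv_le_of_lipschitzOn ℝ (ball_mem_nhds z (by positivity))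
      (h.lipschitzOnWith_ball_of_le_infDist_frontier hE hu hΩo hr hκ hd hσ hcΩ hM0 huM hz
        hzσ)).trans ?_
    rw [Real.coe_toNNReal _ hN.le]
    exact le_max_right _ _

end GlobalBound

section EuclideanPlane

theorem sum_pd_mul_pd (f g : EuclideanSpace ℝ (Fin 2) → ℝ) (x : EuclideanSpace ℝ (Fin 2)) :
    ∑ i, pd i f x * pd i g x = ⟪∇ f x, ∇ g x⟫ := by
  rw [← (EuclideanSpace.basisFun (Fin 2) ℝ).sum_inner_mul_inner]
  refine Finset.sum_congr rfl fun i _ ↦ ?_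
  rw [real_inner_comm (∇ g x), inner_gradient_left, inner_gradient_left,
    EuclideanSpace.basisFun_apply, pd, pd]

theorem isWeakSolution_of_setIntegral_sum_pd_eq_zero {a u v : EuclideanSpace ℝ (Fin 2) → ℝ}
    {Ω : Set (EuclideanSpace ℝ (Fin 2))} (hΩ : IsOpen Ω) (huv : EqOn u v Ω)
    (h : ∀ ψ : EuclideanSpace ℝ (Fin 2) → ℝ, ContDiff ℝ ∞ ψ → HasCompactSupport ψ →
      tsupport ψ ⊆ Ω → ∫ x in Ω, a x * ∑ i, pd i u x * pd i ψ x = 0) :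
    IsWeakSolution a Ω v := by
  intro ψ hψ hψc hψΩ
  rw [← h ψ hψ hψc hψΩ, ← setIntegral_eq_integral_of_forall_compl_eq_zero fun x hx ↦ by
    rw [gradient_eq_zero_of_notMem_tsupport fun hxψ ↦ hx (hψΩ hxψ), inner_zero_right, mul_zero]]
  refine setIntegral_congr_fun hΩ.measurableSet fun x hx ↦ ?_
  simp only [sum_pd_mul_pd, (huv.eventuallyEq_of_mem (hΩ.mem_nhds hx)).gradient_eq]

theorem stmt13_general {Ω : Set (EuclideanSpace ℝ (Fin 2))} (hΩb : Bornology.IsBounded Ω)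
    {f φ : EuclideanSpace ℝ (Fin 2) → ℝ} (hf : ContDiff ℝ 2 f) (hΩ : Ω = {x | f x < 0})
    (hne : ∀ x ∈ frontier Ω, fderiv ℝ f x ≠ 0) (hφ : ContDiff ℝ 2 φ) {σ : ℝ} (hσ : 0 < σ)
    {κ : Fin 2 → ℝ} (hκ : ∀ i, 0 < κ i) :
    ∃ C > 0, ∀ (c : Fin 2 → EuclideanSpace ℝ (Fin 2)) (r : Fin 2 → ℝ), (∀ i, 0 < r i) →
      Pairwise (Disjoint on fun i ↦ ball (c i) (r i)) →
      (∀ i, closedBall (c i) (r i) ⊆ innerReg Ω σ) →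
      ∀ u : EuclideanSpace ℝ (Fin 2) → ℝ,
        (∃ K, LipschitzOnWith K u Ω) →
        ContinuousOn u (closure Ω) →
        EqOn u φ (frontier Ω) →
        (∀ ψ : EuclideanSpace ℝ (Fin 2) → ℝ, ContDiff ℝ ∞ ψ → HasCompactSupport ψ →
          tsupport ψ ⊆ Ω →
          ∫ x in Ω, conductivity c r κ x * ∑ i, pd i u x * pd i ψ x = 0) →
        ∀ x ∈ Ω, ‖fderiv ℝ u x‖ ≤ C := by
  have hΩo : IsOpen Ω := hΩ ▸ isOpen_lt hf.continuous continuous_const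
  obtain ⟨C, hC, hbound⟩ := exists_forall_norm_fderiv_le_of_conductivity
    finrank_euclideanSpace_fin hΩ hΩb hf hne hφ hσ hκ
  refine ⟨C, hC, fun c r hr hd hc u ⟨K, hK⟩ huc huφ h x hx ↦ ?_⟩
  obtain ⟨v, hv, huv⟩ := hK.extend_real
  have hvφ : EqOn v φ (frontier Ω) :=
    ((huv.of_subset_closure huc hv.continuous.continuousOn subset_closure subset_rfl).mono
      frontier_subset_closure).symm.trans huφ
  rw [(huv.eventuallyEq_of_mem (hΩo.mem_nhds hx)).fderiv_eq]
  exact hbound c r hr hd hc v K hv hvφ (isWeakSolution_of_setIntegral_sum_pd_eq_zero hΩo huv h) x hx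

end EuclideanPlane

section UnitDisks

variable {δ : ℝ}

theorem two_lt_norm_ctr (hδ : 0 < δ) : 2 < ‖ctr δ‖ := by
  rw [EuclideanSpace.norm_eq, Fin.sum_univ_two]
  simp only [ctr, WithLp.equiv_symm_apply_ofLp, Matrix.cons_val_zero, Matrix.cons_val_one,
    norm_zero, Real.norm_eq_abs, sq_abs, ne_eq, OfNat.ofNat_ne_zero, not_false_eq_true, zero_pow,
    zero_add]
  exact Real.lt_sqrt_of_sq_lt (by nlinarith)

theorem pairwise_disjoint_ball_ctr (hδ : 0 < δ) :
    Pairwise (Disjoint on fun i ↦ ball (![0, ctr δ] i) ((1 : Fin 2 → ℝ) i)) := by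
  have h : Disjoint (ball 0 1) (ball (ctr δ) 1) := ball_disjoint_ball (by
    rw [dist_zero_left, one_add_one_eq_two]
    exact (two_lt_norm_ctr hδ).le)
  refine pairwise_disjoint_on _ |>.2 fun i j hij ↦ ?_
  obtain ⟨rfl, rfl⟩ : i = 0 ∧ j = 1 := by decide +revert
  exact h

theorem aFun_eq_conductivity (hδ : 0 < δ) (κp κm : ℝ) :
    aFun δ κp κm = conductivity ![0, ctr δ] 1 ![κp, κm] := by
  funext x
  have hd := pairwise_disjoint_ball_ctr hδ
  by_cases h₀ : x ∈ Bp
  · rw [aFun, if_pos h₀]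
    exact (conductivity_of_mem_ball (κ := ![κp, κm]) hd (i := 0) h₀).symm
  by_cases h₁ : x ∈ Bm δ
  · rw [aFun, if_neg h₀, if_pos h₁]
    exact (conductivity_of_mem_ball (κ := ![κp, κm]) hd (i := 1) h₁).symm
  · rw [aFun, if_neg h₀, if_neg h₁]
    exact
      (conductivity_of_forall_notMem_ball (c := ![0, ctr δ]) (r := 1) (κ := ![κp, κm])
        (Fin.forall_fin_two.2 ⟨h₀, h₁⟩)).symm

end UnitDisks

/-- Gradient bound on all of `Ω`: there is a constant `C′` depending only on
`Ω, μ, δ₀, κ⁺, κ⁻` and `φ` such that any Lipschitz weak solution `u` of `div(a∇u)=0`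
with boundary value `φ` satisfies `ess sup_{Ω} |∇u| ≤ C′`. -/
theorem stmt13 (Ω : Set (EuclideanSpace ℝ (Fin 2)))
    (hΩo : IsOpen Ω) (hΩb : Bornology.IsBounded Ω) (hΩs : SmoothBoundary Ω)
    (μ δ₀ κp κm : ℝ) (hμ : μ ∈ Ioo (0:ℝ) 1) (hδ₀ : 0 < δ₀)
    (hκp : 0 < κp) (hκm : 0 < κm)
    (φ : EuclideanSpace ℝ (Fin 2) → ℝ) (hφ : ContDiff ℝ (⊤ : ℕ∞) φ) :
    ∃ C' > 0, ∀ δ ∈ Ioo 0 δ₀,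
      closure Bp ∪ closure (Bm δ) ⊆ innerReg Ω (2 * μ) →
      ∀ u : EuclideanSpace ℝ (Fin 2) → ℝ,
        (∃ K, LipschitzOnWith K u Ω) →
        ContinuousOn u (closure Ω) →
        EqOn u φ (frontier Ω) →
        (∀ ψ : EuclideanSpace ℝ (Fin 2) → ℝ, ContDiff ℝ (⊤ : ℕ∞) ψ → HasCompactSupport ψ →
          tsupport ψ ⊆ Ω →
          ∫ x in Ω, aFun δ κp κm x * ∑ i, pd i u x * pd i ψ x = 0) →
        ∀ᵐ x ∂volume, x ∈ Ω → ‖fderiv ℝ u x‖ ≤ C' := by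
  obtain ⟨f, hf, hΩ, hne⟩ := hΩs
  have two_le {g : EuclideanSpace ℝ (Fin 2) → ℝ} (hg : ContDiff ℝ (⊤ : ℕ∞) g) : ContDiff ℝ 2 g :=
    contDiff_infty.1 hg 2
  obtain ⟨C, hC, hbound⟩ := stmt13_general hΩb (two_le hf) hΩ hne (two_le hφ)
    (mul_pos two_pos hμ.1) (κ := ![κp, κm]) (Fin.forall_fin_two.2 ⟨hκp, hκm⟩)
  refine ⟨C, hC, fun δ hδ hsub u hu huc huφ h ↦ .of_forall ?_⟩
  rw [Bp, Bm, closure_ball _ one_ne_zero, closure_ball _ one_ne_zero, union_subset_iff] at hsub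
  rw [aFun_eq_conductivity hδ.1] at h
  exact hbound ![0, ctr δ] 1 (fun _ ↦ one_pos) (pairwise_disjoint_ball_ctr hδ.1)
    (Fin.forall_fin_two.2 hsub) u hu huc huφ h
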